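/- arXiv:1703.04243 — 6 statements merged into one kernel-verified Lean document; each statement's English description precedes it below -/
import Mathlib

section
/- Let α = β ≥ −1/2, let ρ ≥ 1 and let n ≥ 1 be an integer. Then for every z on the Bernstein ellipse E_ρ, |P_n^{(α,α)}(z)| ≤ |P_n^{(α,α)}((ρ + ρ⁻¹)/2)| = |P_n^{(α,α)}(−(ρ + ρ⁻¹)/2)|, i.e. the maximum of |P_n^{(α,α)}| over E_ρ is attained at the two endpoints ±(ρ + ρ⁻¹)/2 of the major axis. Moreover, if α = β > −1/2, then equality holds only at these two points. -/
open Finset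

/-- Pochhammer symbol `(a)_j = a (a+1) ⋯ (a+j-1)`. -/
noncomputable def poch (a : ℝ) (j : ℕ) : ℝ := ∏ i ∈ Finset.range j, (a + i)

/-- Generalized binomial coefficient `binom(a, m) = a (a-1) ⋯ (a-m+1) / m!`. -/
noncomputable def gbinom (a : ℝ) (m : ℕ) : ℝ :=
  (∏ i ∈ Finset.range m, (a - i)) / (Nat.factorial m)

/-- Jacobi polynomial `P_n^{(α,β)}(x)` of a real variable. -/
noncomputable def jacobiP (α β : ℝ) (n : ℕ) (x : ℝ) : ℝ :=
  (1 / 2 ^ n) * ∑ k ∈ Finset.range (n + 1),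
    gbinom ((n : ℝ) + α) (n - k) * gbinom ((n : ℝ) + β) k * (x - 1) ^ k * (x + 1) ^ (n - k)

/-- Jacobi polynomial `P_n^{(α,β)}(z)` of a complex variable. -/
noncomputable def jacobiC (α β : ℝ) (n : ℕ) (z : ℂ) : ℂ :=
  (1 / 2 ^ n) * ∑ k ∈ Finset.range (n + 1),
    ((gbinom ((n : ℝ) + α) (n - k) * gbinom ((n : ℝ) + β) k : ℝ) : ℂ) *
      (z - 1) ^ k * (z + 1) ^ (n - k)

/-- Chebyshev-connection coefficients `d_{k,n}`, given by a terminating ₃F₂ sum. -/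
noncomputable def dCoeff (α β : ℝ) (n k : ℕ) : ℝ :=
  (poch ((n : ℝ) + α + β + 1) k * poch ((k : ℝ) + α + 1) (n - k)) /
      ((Nat.factorial (n - k)) * 2 ^ (2 * k) * (Nat.factorial k)) *
    ∑ j ∈ Finset.range (n - k + 1),
      (poch ((k : ℝ) - n) j * poch ((n : ℝ) + k + α + β + 1) j * poch ((k : ℝ) + 1 / 2) j) /
        (poch ((k : ℝ) + α + 1) j * poch (2 * (k : ℝ) + 1) j * (Nat.factorial j))

/-- The Bernstein ellipse `E_ρ`: the set of points `z = (u + u⁻¹)/2` with `|u| = ρ`. -/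
def bernsteinEllipse (ρ : ℝ) : Set ℂ :=
  {z : ℂ | ∃ u : ℂ, ‖u‖ = ρ ∧ z = (u + u⁻¹) / 2}

/-!
Put `z = (u + u⁻¹) / 2`. Since `z ∓ 1 = (u ∓ 1)² / (2u)`, the function `(4u)ⁿ P_n^{(α,α)}(z)` is a
polynomial `Q` in `u` of degree `2n`. It satisfies a differential equation which is hypergeometric
in `u²`, so its coefficients obey a two-term recurrence, and for `α ≥ -1/2` the recurrence
propagates nonnegativity from the constant term. The triangle inequality then gives
`|Q(u)| ≤ Q(|u|)`. For `α > -1/2` the coefficients of `1` and `u²` are both positive, so equality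
forces `u²` to be a nonnegative real, that is `u = ±|u|`.
-/

open Polynomial

section NonnegCoefficients

lemma sameRay_of_norm_sum_eq {E ι : Type*} [NormedAddCommGroup E] [NormedSpace ℝ E]
    [StrictConvexSpace ℝ E] {s : Finset ι} {f : ι → E} (h : ‖∑ k ∈ s, f k‖ = ∑ k ∈ s, ‖f k‖)
    {i j : ι} (hi : i ∈ s) (hj : j ∈ s) : SameRay ℝ (f i) (f j) := by
  classical
  rcases eq_or_ne i j with rfl | hij
  · exact SameRay.rfl
  have hpair : ({i, j} : Finset ι) ⊆ s := by simp [insert_subset_iff, hi, hj]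
  rw [← sum_sdiff hpair, ← sum_sdiff hpair, sum_pair hij, sum_pair hij] at h
  have htriangle := norm_add_le (∑ k ∈ s \ {i, j}, f k) (f i + f j)
  have hrest := norm_sum_le (s \ {i, j}) f
  exact sameRay_iff_norm_add.2 (le_antisymm (norm_add_le _ _) (by linarith))

variable {A : Type*} {p : ℝ[X]}

lemma norm_aeval_le_eval_norm [SeminormedRing A] [NormedAlgebra ℝ A] [NormOneClass A]
    (hp : ∀ j, 0 ≤ p.coeff j) (u : A) : ‖aeval u p‖ ≤ p.eval ‖u‖ := by
  rw [aeval_eq_sum_range, eval_eq_sum_range]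
  refine norm_sum_le_of_le _ fun j _ ↦ ?_
  rw [norm_smul, Real.norm_of_nonneg (hp j)]
  exact mul_le_mul_of_nonneg_left (norm_pow_le u j) (hp j)

lemma sameRay_pow_of_norm_aeval_eq [NormedRing A] [NormedAlgebra ℝ A] [NormOneClass A]
    [NormMulClass A] [StrictConvexSpace ℝ A] (hp : ∀ j, 0 ≤ p.coeff j) {u : A}
    (h : ‖aeval u p‖ = p.eval ‖u‖) {i j : ℕ} (hi : 0 < p.coeff i) (hj : 0 < p.coeff j) :
    SameRay ℝ (u ^ i) (u ^ j) := by
  have hsum : ‖∑ k ∈ range (p.natDegree + 1), p.coeff k • u ^ k‖ =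
      ∑ k ∈ range (p.natDegree + 1), ‖p.coeff k • u ^ k‖ := by
    rw [← aeval_eq_sum_range, h, eval_eq_sum_range]
    exact sum_congr rfl fun k _ ↦ by rw [norm_smul, Real.norm_of_nonneg (hp k), norm_pow]
  have hmem {k : ℕ} (hk : 0 < p.coeff k) : k ∈ range (p.natDegree + 1) :=
    mem_range_succ_iff.2 (le_natDegree_of_ne_zero hk.ne')
  have hray := sameRay_of_norm_sum_eq hsum (hmem hi) (hmem hj)
  simpa [smul_smul, hi.ne', hj.ne'] using
    (hray.pos_smul_left (inv_pos.2 hi)).pos_smul_right (inv_pos.2 hj)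

end NonnegCoefficients

section JacobiWeight

lemma succ_mul_gbinom_succ (a : ℝ) (k : ℕ) :
    (k + 1) * gbinom a (k + 1) = (a - k) * gbinom a k := by
  simp only [gbinom, prod_range_succ, Nat.factorial_succ, Nat.cast_mul, Nat.cast_succ]
  field_simp

lemma gbinom_pos {a : ℝ} {k : ℕ} (h : (k : ℝ) < a + 1) : 0 < gbinom a k := by
  refine div_pos (prod_pos fun i hi ↦ ?_) (by positivity)
  have : (i : ℝ) + 1 ≤ k := mod_cast mem_range.1 hi
  linarith

/-- The coefficient of `(x - 1)^k (x + 1)^m` in `2^n P_n^{(α,β)}(x)`, where `n = k + m`. -/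
noncomputable def jacobiWeight (α β : ℝ) (k m : ℕ) : ℝ :=
  gbinom ((k + m : ℕ) + α) m * gbinom ((k + m : ℕ) + β) k

lemma jacobiWeight_pos {α β : ℝ} (hα : -1 < α) (hβ : -1 < β) (k m : ℕ) :
    0 < jacobiWeight α β k m := by
  refine mul_pos (gbinom_pos ?_) (gbinom_pos ?_) <;> push_cast
  · linarith [k.cast_nonneg (α := ℝ)]
  · linarith [m.cast_nonneg (α := ℝ)]

lemma jacobiWeight_swap (α β : ℝ) (k m : ℕ) : jacobiWeight α β k m = jacobiWeight β α m k := by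
  rw [jacobiWeight, jacobiWeight, add_comm k m, mul_comm]

lemma jacobiWeight_succ_left (α β : ℝ) (k m : ℕ) :
    jacobiWeight α β (k + 1) m * ((k + 1) * (k + 1 + α)) =
      jacobiWeight α β k (m + 1) * ((m + 1) * (m + 1 + β)) := by
  have hα := succ_mul_gbinom_succ ((k + m + 1 : ℕ) + α) m
  have hβ := succ_mul_gbinom_succ ((k + m + 1 : ℕ) + β) k
  rw [jacobiWeight, jacobiWeight, add_right_comm k 1 m, ← add_assoc k m 1]
  push_cast at hα hβ ⊢
  linear_combination gbinom (k + m + 1 + α) m * (k + 1 + α) * hβ -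
    gbinom (k + m + 1 + β) k * (m + 1 + β) * hα

end JacobiWeight

section JacobiPolynomial

variable (α β : ℝ) (n : ℕ)

lemma jacobiC_eq_sum_antidiagonal (z : ℂ) :
    jacobiC α β n z = (1 / 2 ^ n) * ∑ p ∈ antidiagonal n,
      (jacobiWeight α β p.1 p.2 : ℂ) * (z - 1) ^ p.1 * (z + 1) ^ p.2 := by
  rw [jacobiC, ← Finset.Nat.sum_antidiagonal_eq_sum_range_succ fun k m ↦
    ((gbinom (n + α) m * gbinom (n + β) k : ℝ) : ℂ) * (z - 1) ^ k * (z + 1) ^ m]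
  congr 1
  exact sum_congr rfl fun p hp ↦ by rw [jacobiWeight, mem_antidiagonal.1 hp]

lemma jacobiC_ofReal (x : ℝ) : jacobiC α β n x = jacobiP α β n x := by
  simp [jacobiC, jacobiP]

lemma jacobiC_neg (z : ℂ) : jacobiC α β n (-z) = (-1) ^ n * jacobiC β α n z := by
  rw [jacobiC_eq_sum_antidiagonal, jacobiC_eq_sum_antidiagonal,
    ← Finset.Nat.sum_antidiagonal_swap, mul_left_comm]
  congr 1
  rw [mul_sum]
  refine sum_congr rfl fun p hp ↦ ?_
  rw [Prod.fst_swap, Prod.snd_swap, jacobiWeight_swap, show -z - 1 = -1 * (z + 1) by ring,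
    show -z + 1 = -1 * (z - 1) by ring, mul_pow, mul_pow, ← mem_antidiagonal.1 hp, pow_add]
  ring

lemma abs_jacobiP_neg (x : ℝ) : |jacobiP α β n (-x)| = |jacobiP β α n x| := by
  have h := congrArg norm (jacobiC_neg α β n x)
  rwa [norm_mul, norm_pow, norm_neg, norm_one, one_pow, one_mul, ← Complex.ofReal_neg,
    jacobiC_ofReal, jacobiC_ofReal, Complex.norm_real, Complex.norm_real] at h

end JacobiPolynomial

section JoukowskiJacobi

/-- The polynomial `(X - 1)^(2k) (X + 1)^(2m)`, which is `(2u)^(k + m) (z - 1)^k (z + 1)^m` at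
`X = u` when `z = (u + u⁻¹) / 2`. -/
noncomputable def joukowskiTerm (k m : ℕ) : ℝ[X] := (X - C 1) ^ (2 * k) * (X + C 1) ^ (2 * m)

/-- The Jacobi polynomial in the Joukowski variable `u`, cleared of its denominator: the polynomial
whose value at `u` is `(4u)^n P_n^{(α,β)}((u + u⁻¹) / 2)`. -/
noncomputable def joukowskiJacobi (α β : ℝ) (n : ℕ) : ℝ[X] :=
  ∑ p ∈ antidiagonal n, jacobiWeight α β p.1 p.2 • joukowskiTerm p.1 p.2

lemma joukowskiTerm_monic (k m : ℕ) : (joukowskiTerm k m).Monic :=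
  ((monic_X_sub_C 1).pow _).mul ((monic_X_add_C 1).pow _)

lemma natDegree_joukowskiTerm (k m : ℕ) : (joukowskiTerm k m).natDegree = 2 * (k + m) := by
  rw [joukowskiTerm, ((monic_X_sub_C 1).pow _).natDegree_mul ((monic_X_add_C 1).pow _),
    natDegree_pow, natDegree_pow, natDegree_X_sub_C, natDegree_X_add_C]
  ring

lemma coeff_zero_joukowskiTerm (k m : ℕ) : (joukowskiTerm k m).coeff 0 = 1 := by
  simp [coeff_zero_eq_eval_zero, joukowskiTerm]

variable {α β : ℝ} {n : ℕ}

lemma coeff_joukowskiJacobi_of_lt {j : ℕ} (hj : 2 * n < j) :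
    (joukowskiJacobi α β n).coeff j = 0 := by
  rw [joukowskiJacobi, finsetSum_coeff]
  refine sum_eq_zero fun p hp ↦ ?_
  rw [coeff_smul, coeff_eq_zero_of_natDegree_lt, smul_zero]
  rwa [natDegree_joukowskiTerm, mem_antidiagonal.1 hp]

lemma coeff_two_mul_joukowskiJacobi_pos (hα : -1 < α) (hβ : -1 < β) :
    0 < (joukowskiJacobi α β n).coeff (2 * n) := by
  rw [joukowskiJacobi, finsetSum_coeff]
  refine sum_pos (fun p hp ↦ ?_) ⟨(0, n), by simp⟩
  have hlead := (joukowskiTerm_monic p.1 p.2).coeff_natDegree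
  rw [natDegree_joukowskiTerm, mem_antidiagonal.1 hp] at hlead
  rw [coeff_smul, hlead, smul_eq_mul, mul_one]
  exact jacobiWeight_pos hα hβ _ _

lemma coeff_zero_joukowskiJacobi_pos (hα : -1 < α) (hβ : -1 < β) :
    0 < (joukowskiJacobi α β n).coeff 0 := by
  rw [joukowskiJacobi, finsetSum_coeff]
  refine sum_pos (fun p _ ↦ ?_) ⟨(0, n), by simp⟩
  rw [coeff_smul, coeff_zero_joukowskiTerm, smul_eq_mul, mul_one]
  exact jacobiWeight_pos hα hβ _ _

lemma aeval_joukowskiTerm {u : ℂ} (hu : u ≠ 0) (k m : ℕ) :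
    aeval u (joukowskiTerm k m) =
      (2 * u) ^ (k + m) * (((u + u⁻¹) / 2 - 1) ^ k * ((u + u⁻¹) / 2 + 1) ^ m) := by
  have hsub : (u - 1) ^ 2 = 2 * u * ((u + u⁻¹) / 2 - 1) := by field_simp; ring
  have hadd : (u + 1) ^ 2 = 2 * u * ((u + u⁻¹) / 2 + 1) := by field_simp; ring
  simp only [joukowskiTerm, map_mul, map_pow, map_sub, map_add, aeval_X, map_one, pow_mul, hsub,
    hadd, mul_pow, pow_add]
  ring

lemma aeval_joukowskiJacobi {u : ℂ} (hu : u ≠ 0) :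
    aeval u (joukowskiJacobi α β n) = (4 * u) ^ n * jacobiC α β n ((u + u⁻¹) / 2) := by
  have hpow : (4 * u) ^ n * (1 / 2 ^ n) = (2 * u) ^ n := by
    rw [← one_div_pow, ← mul_pow]
    ring
  rw [jacobiC_eq_sum_antidiagonal, ← mul_assoc, hpow, joukowskiJacobi, map_sum, mul_sum]
  refine sum_congr rfl fun p hp ↦ ?_
  rw [map_smul, aeval_joukowskiTerm hu, mem_antidiagonal.1 hp, Complex.real_smul]
  ring

lemma norm_aeval_joukowskiJacobi {u : ℂ} (hu : u ≠ 0) :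
    ‖aeval u (joukowskiJacobi α β n)‖ = (4 * ‖u‖) ^ n * ‖jacobiC α β n ((u + u⁻¹) / 2)‖ := by
  simp [aeval_joukowskiJacobi hu]

lemma eval_joukowskiJacobi {r : ℝ} (hr : r ≠ 0) :
    (joukowskiJacobi α β n).eval r = (4 * r) ^ n * jacobiP α β n ((r + r⁻¹) / 2) := by
  have h := aeval_joukowskiJacobi (α := α) (β := β) (n := n) (Complex.ofReal_ne_zero.2 hr)
  rw [← Complex.coe_algebraMap, aeval_algebraMap_apply_eq_algebraMap_eval,
    Complex.coe_algebraMap] at h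
  apply Complex.ofReal_injective
  rw [h]
  push_cast [← jacobiC_ofReal]
  rfl

end JoukowskiJacobi

section DifferentialEquation

/-- The Euler operator `θ = X d/dX`, which multiplies `X^j` by `j`. -/
noncomputable def eulerOp : Module.End ℝ ℝ[X] := LinearMap.mulLeft ℝ X * derivative

/-- The operator `X² (θ + 2α + 1) (θ - 2n) - θ (θ - 2n - 2α - 1)`: the Gegenbauer differential
operator in the Joukowski variable, in a form that displays its action on coefficients. -/
noncomputable def gegenbauerOp (α : ℝ) (n : ℕ) : Module.End ℝ ℝ[X] :=
  LinearMap.mulLeft ℝ (X ^ 2) *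
      ((eulerOp + algebraMap ℝ _ (2 * α + 1)) * (eulerOp - algebraMap ℝ _ (2 * n))) -
    eulerOp * (eulerOp - algebraMap ℝ _ (2 * n + 2 * α + 1))

lemma eulerOp_apply (p : ℝ[X]) : eulerOp p = X * derivative p := rfl

lemma gegenbauerOp_apply (α : ℝ) (n : ℕ) (p : ℝ[X]) :
    gegenbauerOp α n p =
      X ^ 2 * (eulerOp (eulerOp p - (2 * n : ℝ) • p) +
        (2 * α + 1) • (eulerOp p - (2 * n : ℝ) • p)) -
      eulerOp (eulerOp p - (2 * n + 2 * α + 1) • p) := rfl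

lemma coeff_eulerOp (p : ℝ[X]) (j : ℕ) : (eulerOp p).coeff j = j * p.coeff j := by
  cases j with
  | zero => simp [eulerOp_apply]
  | succ j => rw [eulerOp_apply, coeff_X_mul, coeff_derivative, mul_comm, Nat.cast_succ]

lemma coeff_one_gegenbauerOp (α : ℝ) (n : ℕ) (p : ℝ[X]) :
    (gegenbauerOp α n p).coeff 1 = (2 * n + 2 * α) * p.coeff 1 := by
  simp only [gegenbauerOp_apply, coeff_sub, coeff_X_pow_mul', coeff_eulerOp, coeff_smul,
    smul_eq_mul, Nat.not_succ_le_self, if_false, Nat.cast_one]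
  ring

lemma coeff_add_two_gegenbauerOp (α : ℝ) (n : ℕ) (p : ℝ[X]) (j : ℕ) :
    (gegenbauerOp α n p).coeff (j + 2) =
      (j + 2) * (2 * n + 2 * α - 1 - j) * p.coeff (j + 2) -
        (j + 2 * α + 1) * (2 * n - j) * p.coeff j := by
  simp only [gegenbauerOp_apply, coeff_sub, coeff_add, coeff_X_pow_mul, coeff_eulerOp, coeff_smul,
    smul_eq_mul]
  push_cast
  ring

lemma eulerOp_mul (p q : ℝ[X]) : eulerOp (p * q) = eulerOp p * q + p * eulerOp q := by
  simp only [eulerOp_apply, derivative_mul]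
  ring

lemma mul_eulerOp_pow (p : ℝ[X]) (i : ℕ) : p * eulerOp (p ^ i) = i * p ^ i * eulerOp p := by
  cases i with
  | zero => simp [eulerOp_apply]
  | succ i =>
    simp only [eulerOp_apply, derivative_pow_succ, map_add, map_natCast, map_one, Nat.cast_succ]
    ring

lemma sq_sub_one_mul_eulerOp_joukowskiTerm (k m : ℕ) :
    (X ^ 2 - 1) * eulerOp (joukowskiTerm k m) =
      2 * ((k : ℝ[X]) * (X ^ 2 + X) + (m : ℝ[X]) * (X ^ 2 - X)) * joukowskiTerm k m := by
  have hsub := mul_eulerOp_pow (X - C 1) (2 * k)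
  have hadd := mul_eulerOp_pow (X + C 1) (2 * m)
  rw [eulerOp_apply (X - C 1), derivative_X_sub_C, map_one] at hsub
  rw [eulerOp_apply (X + C 1), derivative_X_add_C, map_one] at hadd
  rw [joukowskiTerm, eulerOp_mul, map_one]
  push_cast at hsub hadd
  linear_combination (X + 1) ^ (2 * m) * (X + 1) * hsub + (X - 1) ^ (2 * k) * (X - 1) * hadd

lemma sq_sub_one_mul_eulerOp_eulerOp_joukowskiTerm (k m : ℕ) :
    (X ^ 2 - 1) * eulerOp (eulerOp (joukowskiTerm k m)) =
      2 * ((k : ℝ[X]) * (2 * X ^ 2 + X) + (m : ℝ[X]) * (2 * X ^ 2 - X)) * joukowskiTerm k m +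
        2 * ((k : ℝ[X]) * (X ^ 2 + X) + (m : ℝ[X]) * (X ^ 2 - X) - X ^ 2) *
          eulerOp (joukowskiTerm k m) := by
  have hleft : eulerOp (X ^ 2 - 1) = 2 * X ^ 2 := by
    simp only [eulerOp_apply, derivative_sub, derivative_X_sq, derivative_one, map_ofNat]
    ring
  have hright : eulerOp (2 * ((k : ℝ[X]) * (X ^ 2 + X) + (m : ℝ[X]) * (X ^ 2 - X))) =
      2 * ((k : ℝ[X]) * (2 * X ^ 2 + X) + (m : ℝ[X]) * (2 * X ^ 2 - X)) := by
    simp only [eulerOp_apply, derivative_mul, derivative_add, derivative_sub, derivative_ofNat,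
      derivative_natCast, derivative_X_sq, derivative_X, map_ofNat]
    ring
  have h := congrArg eulerOp (sq_sub_one_mul_eulerOp_joukowskiTerm k m)
  rw [eulerOp_mul, eulerOp_mul, hleft, hright] at h
  linear_combination h

lemma natCast_mul_joukowskiTerm_pred_left (k m : ℕ) :
    (k : ℝ[X]) * ((X - 1) ^ 2 * joukowskiTerm (k - 1) m) = (k : ℝ[X]) * joukowskiTerm k m := by
  cases k with
  | zero => simp
  | succ k =>
    rw [joukowskiTerm, joukowskiTerm, Nat.add_sub_cancel, map_one]
    ring

lemma natCast_mul_joukowskiTerm_pred_right (k m : ℕ) :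
    (m : ℝ[X]) * ((X + 1) ^ 2 * joukowskiTerm k (m - 1)) = (m : ℝ[X]) * joukowskiTerm k m := by
  cases m with
  | zero => simp
  | succ m =>
    rw [joukowskiTerm, joukowskiTerm, Nat.add_sub_cancel, map_one]
    ring

lemma gegenbauerOp_eq (α : ℝ) (n : ℕ) (p : ℝ[X]) :
    gegenbauerOp α n p =
      (X ^ 2 - 1) * (eulerOp (eulerOp p) - 2 * (n : ℝ[X]) * eulerOp p) +
        (2 * C α + 1) * ((X ^ 2 + 1) * eulerOp p - 2 * (n : ℝ[X]) * X ^ 2 * p) := by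
  rw [gegenbauerOp_apply, map_sub, map_sub, map_smul, map_smul]
  simp only [smul_eq_C_mul, map_add, map_mul, map_ofNat, map_natCast, map_one]
  ring

-- At `k = 0` or `m = 0` the truncated exponent is multiplied by zero.
lemma gegenbauerOp_joukowskiTerm (α : ℝ) (k m : ℕ) :
    gegenbauerOp α (k + m) (joukowskiTerm k m) =
      (k * (k + α)) • (4 * X * (X ^ 2 - 1) * joukowskiTerm (k - 1) m) -
        (m * (m + α)) • (4 * X * (X ^ 2 - 1) * joukowskiTerm k (m - 1)) := by
  have hne : (X ^ 2 - 1 : ℝ[X]) ^ 2 ≠ 0 := pow_ne_zero 2 (monic_X_pow_sub_C 1 two_ne_zero).ne_zero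
  refine mul_left_cancel₀ hne ?_
  rw [gegenbauerOp_eq, smul_eq_C_mul, smul_eq_C_mul]
  simp only [map_mul, map_add, map_natCast, Nat.cast_add]
  linear_combination
    (X ^ 2 - 1) ^ 2 * sq_sub_one_mul_eulerOp_eulerOp_joukowskiTerm k m +
    (X ^ 2 - 1) * (2 * ((k : ℝ[X]) * (X ^ 2 + X) + (m : ℝ[X]) * (X ^ 2 - X) - X ^ 2) -
      2 * ((k : ℝ[X]) + m) * (X ^ 2 - 1) + (2 * C α + 1) * (X ^ 2 + 1)) *
      sq_sub_one_mul_eulerOp_joukowskiTerm k m -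
    4 * X * (X ^ 2 - 1) * ((k : ℝ[X]) + C α) * (X + 1) ^ 2 *
      natCast_mul_joukowskiTerm_pred_left k m +
    4 * X * (X ^ 2 - 1) * ((m : ℝ[X]) + C α) * (X - 1) ^ 2 *
      natCast_mul_joukowskiTerm_pred_right k m

lemma gegenbauerOp_joukowskiJacobi (α : ℝ) (n : ℕ) :
    gegenbauerOp α n (joukowskiJacobi α α n) = 0 := by
  have hterm : ∀ p ∈ antidiagonal n,
      gegenbauerOp α n (jacobiWeight α α p.1 p.2 • joukowskiTerm p.1 p.2) =
        (jacobiWeight α α p.1 p.2 * (p.1 * (p.1 + α))) •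
            (4 * X * (X ^ 2 - 1) * joukowskiTerm (p.1 - 1) p.2) -
          (jacobiWeight α α p.1 p.2 * (p.2 * (p.2 + α))) •
            (4 * X * (X ^ 2 - 1) * joukowskiTerm p.1 (p.2 - 1)) := fun p hp ↦ by
    rw [← mem_antidiagonal.1 hp, map_smul, gegenbauerOp_joukowskiTerm, smul_sub, smul_smul,
      smul_smul]
  rw [joukowskiJacobi, map_sum, sum_congr rfl hterm, sum_sub_distrib, sub_eq_zero]
  cases n with
  | zero => simp
  | succ n =>
    rw [Finset.Nat.sum_antidiagonal_succ, Finset.Nat.sum_antidiagonal_succ']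
    simp [jacobiWeight_succ_left]

end DifferentialEquation

section GegenbauerCoefficients

variable {α : ℝ} {n : ℕ}

lemma coeff_one_joukowskiJacobi (hα : -1 < α) : (joukowskiJacobi α α n).coeff 1 = 0 := by
  rcases Nat.eq_zero_or_pos n with rfl | hn
  · exact coeff_joukowskiJacobi_of_lt (by norm_num)
  have hzero : (2 * n + 2 * α) * (joukowskiJacobi α α n).coeff 1 = 0 := by
    rw [← coeff_one_gegenbauerOp, gegenbauerOp_joukowskiJacobi, coeff_zero]
  have hn' : (1 : ℝ) ≤ n := mod_cast hn
  exact (mul_eq_zero.1 hzero).resolve_left (by linarith)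

lemma coeff_joukowskiJacobi_recurrence (α : ℝ) (n j : ℕ) :
    (j + 2) * (2 * n + 2 * α - 1 - j) * (joukowskiJacobi α α n).coeff (j + 2) =
      (j + 2 * α + 1) * (2 * n - j) * (joukowskiJacobi α α n).coeff j := by
  rw [← sub_eq_zero, ← coeff_add_two_gegenbauerOp, gegenbauerOp_joukowskiJacobi, coeff_zero]

-- At `α = -1/2` the recurrence multiplies the top coefficient by zero, so that coefficient is
-- treated separately.
lemma coeff_joukowskiJacobi_nonneg (hα : -1 / 2 ≤ α) (j : ℕ) :
    0 ≤ (joukowskiJacobi α α n).coeff j := by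
  have hα' : -1 < α := by linarith
  induction j using Nat.twoStepInduction with
  | zero => exact (coeff_zero_joukowskiJacobi_pos hα' hα').le
  | one => exact (coeff_one_joukowskiJacobi hα').ge
  | more j ih _ =>
    rcases lt_trichotomy (j + 2) (2 * n) with hlt | heq | hgt
    · have hj : (j : ℝ) + 2 + 1 ≤ 2 * n := mod_cast hlt
      have hfactor : 0 < ((j : ℝ) + 2) * (2 * n + 2 * α - 1 - j) :=
        mul_pos (by positivity) (by linarith)
      refine nonneg_of_mul_nonneg_right ?_ hfactor
      rw [coeff_joukowskiJacobi_recurrence]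
      exact mul_nonneg (mul_nonneg (by linarith [j.cast_nonneg (α := ℝ)]) (by linarith)) ih
    · exact heq ▸ (coeff_two_mul_joukowskiJacobi_pos hα' hα').le
    · exact (coeff_joukowskiJacobi_of_lt hgt).ge

lemma coeff_two_joukowskiJacobi_pos (hα : -1 / 2 < α) (hn : 1 ≤ n) :
    0 < (joukowskiJacobi α α n).coeff 2 := by
  have hn' : (1 : ℝ) ≤ n := mod_cast hn
  have hrec : 2 * (2 * n + 2 * α - 1) * (joukowskiJacobi α α n).coeff 2 =
      (2 * α + 1) * (2 * n) * (joukowskiJacobi α α n).coeff 0 := by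
    simpa using coeff_joukowskiJacobi_recurrence α n 0
  refine pos_of_mul_pos_right (a := 2 * (2 * n + 2 * α - 1)) ?_ (by linarith)
  rw [hrec]
  exact mul_pos (mul_pos (by linarith) (by linarith))
    (coeff_zero_joukowskiJacobi_pos (by linarith) (by linarith))

end GegenbauerCoefficients

section Maximum

variable {α : ℝ} {n : ℕ}

lemma eval_joukowskiJacobi_eq_abs (hα : -1 / 2 ≤ α) {r : ℝ} (hr : 0 < r) :
    (joukowskiJacobi α α n).eval r = (4 * r) ^ n * |jacobiP α α n ((r + r⁻¹) / 2)| := by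
  have hnonneg : 0 ≤ (joukowskiJacobi α α n).eval ‖r‖ :=
    (norm_nonneg _).trans (norm_aeval_le_eval_norm (coeff_joukowskiJacobi_nonneg hα) r)
  rw [Real.norm_of_nonneg hr.le] at hnonneg
  rw [← abs_of_nonneg hnonneg, eval_joukowskiJacobi hr.ne', abs_mul, abs_of_pos (by positivity)]

theorem norm_jacobiC_joukowski_le (hα : -1 / 2 ≤ α) {u : ℂ} (hu : u ≠ 0) :
    ‖jacobiC α α n ((u + u⁻¹) / 2)‖ ≤ |jacobiP α α n ((‖u‖ + ‖u‖⁻¹) / 2)| := by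
  have h := norm_aeval_le_eval_norm (coeff_joukowskiJacobi_nonneg (n := n) hα) u
  rw [norm_aeval_joukowskiJacobi hu, eval_joukowskiJacobi_eq_abs hα (norm_pos_iff.2 hu)] at h
  exact le_of_mul_le_mul_left h (by positivity)

theorem eq_norm_or_eq_neg_norm_of_norm_jacobiC_eq (hα : -1 / 2 < α) (hn : 1 ≤ n) {u : ℂ}
    (hu : u ≠ 0)
    (h : ‖jacobiC α α n ((u + u⁻¹) / 2)‖ = |jacobiP α α n ((‖u‖ + ‖u‖⁻¹) / 2)|) :
    u = ‖u‖ ∨ u = -‖u‖ := by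
  have heval : ‖aeval u (joukowskiJacobi α α n)‖ = (joukowskiJacobi α α n).eval ‖u‖ := by
    rw [norm_aeval_joukowskiJacobi hu, eval_joukowskiJacobi_eq_abs hα.le (norm_pos_iff.2 hu), h]
  have hray : SameRay ℝ (u ^ 0) (u ^ 2) :=
    sameRay_pow_of_norm_aeval_eq (coeff_joukowskiJacobi_nonneg hα.le) heval
      (coeff_zero_joukowskiJacobi_pos (by linarith) (by linarith))
      (coeff_two_joukowskiJacobi_pos hα hn)
  have hsq : u ^ 2 = (‖u‖ : ℂ) ^ 2 := by
    simpa using sameRay_iff_norm_smul_eq.1 hray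
  exact sq_eq_sq_iff_eq_or_eq_neg.1 hsq

end Maximum

/-- if `α = β ≥ -1/2`, the maximum of `|P_n^{(α,α)}|` over the Bernstein ellipse
`E_ρ` is attained at the two endpoints `±(ρ + ρ⁻¹)/2` of the major axis; moreover, if
`α > -1/2`, the maximum is attained only at these two points. -/
theorem jacobi_max_gegenbauer
    (α : ℝ) (hα : -1/2 ≤ α) (ρ : ℝ) (hρ : 1 ≤ ρ) (n : ℕ) (hn : 1 ≤ n) :
    (∀ z ∈ bernsteinEllipse ρ,
      ‖jacobiC α α n z‖ ≤ |jacobiP α α n ((ρ + ρ⁻¹) / 2)|) ∧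
    |jacobiP α α n ((ρ + ρ⁻¹) / 2)| = |jacobiP α α n (-((ρ + ρ⁻¹) / 2))| ∧
    (-1/2 < α → ∀ z ∈ bernsteinEllipse ρ,
      ‖jacobiC α α n z‖ = |jacobiP α α n ((ρ + ρ⁻¹) / 2)| →
        z = (((ρ + ρ⁻¹) / 2 : ℝ) : ℂ) ∨ z = -(((ρ + ρ⁻¹) / 2 : ℝ) : ℂ)) := by
  have ne_zero {u : ℂ} (hu : ‖u‖ = ρ) : u ≠ 0 := norm_pos_iff.1 (by linarith)
  refine ⟨?_, (abs_jacobiP_neg α α n _).symm, ?_⟩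
  · rintro z ⟨u, hu, rfl⟩
    exact hu ▸ norm_jacobiC_joukowski_le hα (ne_zero hu)
  · rintro hα' z ⟨u, hu, rfl⟩ heq
    rcases eq_norm_or_eq_neg_norm_of_norm_jacobiC_eq hα' hn (ne_zero hu) (hu ▸ heq) with h | h
    · left
      rw [h, hu]
      push_cast
      rfl
    · right
      rw [h, hu]
      push_cast
      rw [inv_neg]
      ring
end

section
/- Let n ≥ 1 be an integer and ρ > 1. Then min_{z ∈ E_ρ} |T_n(z)| = (ρ^n − ρ^{−n})/2, and the minimum is attained exactly at the 2n points z = (ρ e^{i(2k+1)π/(2n)} + ρ⁻¹ e^{−i(2k+1)π/(2n)})/2, k = 0, 1, …, 2n−1; that is, for every z ∈ E_ρ one has |T_n(z)| ≥ (ρ^n − ρ^{−n})/2, with equality exactly at these points. -/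
/-! On `E_ρ` one has `T_n((u + u⁻¹)/2) = (w + w⁻¹)/2` with `w = u ^ n`, and
`‖w + w⁻¹‖² = (‖w‖ - ‖w‖⁻¹)² + (2 Re w / ‖w‖)²`. So the minimum is attained exactly when `u ^ n` is
purely imaginary, i.e. `u ^ (2n) = -ρ ^ (2n)`, whose solutions are the `2n` roots
`u = ρ e^{i(2k+1)π/(2n)}`. -/

section

open Polynomial.Chebyshev

theorem eval_T_half_add_inv {K : Type*} [Field K] [NeZero (2 : K)] {u : K} (hu : u ≠ 0) (n : ℤ) :
    (T K n).eval ((u + u⁻¹) / 2) = (u ^ n + (u ^ n)⁻¹) / 2 := by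
  induction n using Polynomial.Chebyshev.induct' with
  | zero => simp
  | one => simp
  | add_two n ih_succ ih =>
    simp only [T_add_two, Polynomial.eval_sub, Polynomial.eval_mul, Polynomial.eval_ofNat,
      Polynomial.eval_X, ih_succ, ih, zpow_add₀ hu, zpow_ofNat]
    field_simp
    ring
  | neg n ih => rw [T_neg, ih, zpow_neg, inv_inv, add_comm]

theorem sq_norm_add_inv {w : ℂ} (hw : w ≠ 0) :
    ‖w + w⁻¹‖ ^ 2 = (‖w‖ - ‖w‖⁻¹) ^ 2 + (2 * (w.re / ‖w‖)) ^ 2 := by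
  have hw' : ‖w‖ ≠ 0 := norm_ne_zero_iff.mpr hw
  have norm_sq : ‖w‖ ^ 2 = w.re ^ 2 + w.im ^ 2 := by
    rw [Complex.sq_norm, Complex.normSq_apply, sq, sq]
  have re_mul_conj_inv : (w * starRingEnd ℂ w⁻¹).re = (w.re ^ 2 - w.im ^ 2) / ‖w‖ ^ 2 := by
    rw [Complex.sq_norm, Complex.mul_re, Complex.conj_re, Complex.conj_im, Complex.inv_re,
      Complex.inv_im]
    ring
  rw [Complex.sq_norm, Complex.normSq_add, re_mul_conj_inv, ← Complex.sq_norm, ← Complex.sq_norm,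
    norm_inv]
  field_simp
  linear_combination 2 * norm_sq

theorem abs_norm_sub_inv_norm_le_norm_add_inv {𝕜 : Type*} [NormedDivisionRing 𝕜] (w : 𝕜) :
    |‖w‖ - ‖w‖⁻¹| ≤ ‖w + w⁻¹‖ := by
  simpa only [norm_neg, norm_inv, sub_neg_eq_add] using abs_norm_sub_norm_le w (-w⁻¹)

theorem norm_add_inv_eq_abs_iff {w : ℂ} (hw : w ≠ 0) :
    ‖w + w⁻¹‖ = |‖w‖ - ‖w‖⁻¹| ↔ w.re = 0 := by
  rw [← sq_eq_sq₀ (norm_nonneg _) (abs_nonneg _), sq_abs, sq_norm_add_inv hw]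
  simp [hw]

theorem re_eq_zero_iff_sq_eq_neg_sq_norm (w : ℂ) : w.re = 0 ↔ w ^ 2 = -(‖w‖ : ℂ) ^ 2 := by
  rw [← Complex.ofReal_pow, Complex.sq_norm, Complex.normSq_apply, Complex.ext_iff]
  constructor
  · intro h
    simp [h, sq]
  · rintro ⟨h, -⟩
    simp only [sq, Complex.mul_re, Complex.neg_re, Complex.ofReal_re] at h
    exact mul_self_eq_zero.mp (by linarith)

theorem complex_pow_eq_neg_pow_iff {m : ℕ} (hm : m ≠ 0) (r u : ℂ) :
    u ^ m = -r ^ m ↔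
      ∃ k < m, u = r * Complex.exp (((2 * k + 1) * Real.pi / m : ℝ) * Complex.I) := by
  have hm' : (m : ℂ) ≠ 0 := Nat.cast_ne_zero.mpr hm
  have exp_pow : (r * Complex.exp (Real.pi * Complex.I / m)) ^ m = -r ^ m := by
    rw [mul_pow, ← Complex.exp_nat_mul, mul_div_cancel₀ _ hm', Complex.exp_pi_mul_I, mul_neg_one]
  have rotate (k : ℕ) :
      Complex.exp (2 * Real.pi * Complex.I / m) ^ k * (r * Complex.exp (Real.pi * Complex.I / m)) =
        r * Complex.exp (((2 * k + 1) * Real.pi / m : ℝ) * Complex.I) := by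
    rw [mul_left_comm, ← Complex.exp_nat_mul, ← Complex.exp_add]
    push_cast
    ring_nf
  rw [← Polynomial.mem_nthRoots (Nat.pos_of_ne_zero hm),
    (Complex.isPrimitiveRoot_exp m hm).nthRoots_eq exp_pow]
  simp only [Multiset.mem_map, Multiset.mem_range, rotate, eq_comm]

theorem abs_norm_pow_sub_le_norm_eval_T_half_add_inv {u : ℂ} (hu : u ≠ 0) (n : ℕ) :
    |‖u‖ ^ n - ‖u‖⁻¹ ^ n| / 2 ≤ ‖(T ℂ n).eval ((u + u⁻¹) / 2)‖ := by
  rw [eval_T_half_add_inv hu, zpow_natCast, norm_div, Complex.norm_ofNat]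
  gcongr
  simpa only [norm_pow, inv_pow] using abs_norm_sub_inv_norm_le_norm_add_inv (u ^ n)

theorem norm_eval_T_half_add_inv_eq_iff {n : ℕ} (hn : n ≠ 0) {u : ℂ} (hu : u ≠ 0) :
    ‖(T ℂ n).eval ((u + u⁻¹) / 2)‖ = |‖u‖ ^ n - ‖u‖⁻¹ ^ n| / 2 ↔
      ∃ k < 2 * n,
        u = ‖u‖ * Complex.exp (((2 * k + 1) * Real.pi / (2 * n) : ℝ) * Complex.I) :=
  calc
    _ ↔ ‖u ^ n + (u ^ n)⁻¹‖ = |‖u ^ n‖ - ‖u ^ n‖⁻¹| := by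
      rw [eval_T_half_add_inv hu, zpow_natCast, norm_div, Complex.norm_ofNat,
        div_left_inj' two_ne_zero, norm_pow, inv_pow]
    _ ↔ (u ^ n).re = 0 := norm_add_inv_eq_abs_iff (pow_ne_zero n hu)
    _ ↔ u ^ (2 * n) = -(‖u‖ : ℂ) ^ (2 * n) := by
      rw [re_eq_zero_iff_sq_eq_neg_sq_norm, norm_pow, Complex.ofReal_pow, ← pow_mul, ← pow_mul,
        mul_comm n]
    _ ↔ _ := by
      rw [complex_pow_eq_neg_pow_iff (by positivity), Nat.cast_mul, Nat.cast_ofNat]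

end

/-- for `ρ > 1`, `min_{z ∈ E_ρ} |T_n(z)| = (ρ^n - ρ^{-n})/2`, attained exactly at
the `2n` points `z = (ρ e^{i(2k+1)π/(2n)} + ρ⁻¹ e^{-i(2k+1)π/(2n)})/2`, `k = 0, …, 2n-1`. -/
theorem chebyshevT_min
    (n : ℕ) (hn : 1 ≤ n) (ρ : ℝ) (hρ : 1 < ρ) :
    ∀ z ∈ bernsteinEllipse ρ,
      (ρ ^ n - ρ⁻¹ ^ n) / 2 ≤ ‖(Polynomial.Chebyshev.T ℂ (n : ℤ)).eval z‖ ∧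
      (‖(Polynomial.Chebyshev.T ℂ (n : ℤ)).eval z‖ = (ρ ^ n - ρ⁻¹ ^ n) / 2 ↔
        ∃ k : ℕ, k < 2 * n ∧
          z = ((ρ : ℂ) * Complex.exp (((2 * k + 1) * Real.pi / (2 * n) : ℝ) * Complex.I) +
              ((ρ : ℂ) * Complex.exp (((2 * k + 1) * Real.pi / (2 * n) : ℝ) * Complex.I))⁻¹)
            / 2) := by
  have hρ₀ : 0 < ρ := one_pos.trans hρ
  have ne_zero {u : ℂ} (hu : ‖u‖ = ρ) : u ≠ 0 := norm_pos_iff.mp (hu ▸ hρ₀)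
  have abs_eq : |ρ ^ n - ρ⁻¹ ^ n| = ρ ^ n - ρ⁻¹ ^ n :=
    abs_of_nonneg <| sub_nonneg.mpr <| by
      gcongr
      exact (inv_lt_one_of_one_lt₀ hρ).le.trans hρ.le
  have eq_iff {u : ℂ} (hu : ‖u‖ = ρ) :
      ‖(Polynomial.Chebyshev.T ℂ n).eval ((u + u⁻¹) / 2)‖ = (ρ ^ n - ρ⁻¹ ^ n) / 2 ↔
        ∃ k < 2 * n, u = ρ * Complex.exp (((2 * k + 1) * Real.pi / (2 * n) : ℝ) * Complex.I) := by
    simpa only [hu, abs_eq] using norm_eval_T_half_add_inv_eq_iff (by omega : n ≠ 0) (ne_zero hu)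
  rintro z ⟨u, hu, rfl⟩
  refine ⟨?_, fun h ↦ ?_, ?_⟩
  · simpa only [hu, abs_eq] using abs_norm_pow_sub_le_norm_eval_T_half_add_inv (ne_zero hu) n
  · obtain ⟨k, hk, hu_eq⟩ := (eq_iff hu).mp h
    exact ⟨k, hk, by rw [← hu_eq]⟩
  · rintro ⟨k, hk, hz⟩
    rw [hz]
    refine (eq_iff ?_).mpr ⟨k, hk, rfl⟩
    rw [norm_mul, Complex.norm_exp_ofReal_mul_I, mul_one, Complex.norm_of_nonneg hρ₀.le]
end

section
/- Let n ≥ 0 be an integer, ρ > 1, and z = (ρ e^{iθ} + ρ⁻¹ e^{−iθ})/2 a point of the Bernstein ellipse E_ρ. Then |U_n(z)|² = (a_{2n+2}(ρ) − cos((2n+2)θ)) / (a_2(ρ) − cos(2θ)), where a_k(ρ) = (ρ^k + ρ^{−k})/2. -/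
/-- `a_k(ρ) = (ρ^k + ρ^{-k})/2`. -/
noncomputable def aCoef (k : ℕ) (ρ : ℝ) : ℝ := (ρ ^ k + ρ⁻¹ ^ k) / 2

/-!
With `w = log ρ + iθ` one has `z = cosh w` and `U_n(cosh w) sinh w = sinh ((n + 1) w)`. Taking
squared norms, everything follows from `|sinh (x + iy)|² = (cosh 2x - cos 2y) / 2` and
`a_k(ρ) = cosh (k log ρ)`.
-/

open Polynomial.Chebyshev

theorem norm_sinh_sq (w : ℂ) :
    ‖Complex.sinh w‖ ^ 2 = (Real.cosh (2 * w.re) - Real.cos (2 * w.im)) / 2 := by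
  have sinh_re_im : Complex.sinh w =
      (Real.sinh w.re * Real.cos w.im : ℝ) + (Real.cosh w.re * Real.sin w.im : ℝ) * Complex.I := by
    conv_lhs => rw [← Complex.re_add_im w, Complex.sinh_add, Complex.sinh_mul_I, Complex.cosh_mul_I]
    push_cast
    ring
  rw [sinh_re_im, ← Complex.normSq_eq_norm_sq, Complex.normSq_add_mul_I, Real.cosh_two_mul,
    Real.cos_two_mul', mul_pow, mul_pow, Real.cosh_sq, Real.sin_sq]
  ring

theorem norm_eval_U_cosh_sq_mul (n : ℤ) (w : ℂ) :
    ‖(U ℂ n).eval (Complex.cosh w)‖ ^ 2 * (Real.cosh (2 * w.re) - Real.cos (2 * w.im)) =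
      Real.cosh (2 * ((n + 1) * w.re)) - Real.cos (2 * ((n + 1) * w.im)) := by
  have norm_sq_eq : ‖(U ℂ n).eval (Complex.cosh w)‖ ^ 2 * ‖Complex.sinh w‖ ^ 2 =
      ‖Complex.sinh ((n + 1) * w)‖ ^ 2 := by
    rw [← mul_pow, ← norm_mul, U_complex_cosh]
  have re_eq : ((n + 1) * w).re = (n + 1) * w.re := by simp
  have im_eq : ((n + 1) * w).im = (n + 1) * w.im := by simp
  rw [norm_sinh_sq, norm_sinh_sq, re_eq, im_eq] at norm_sq_eq
  linear_combination 2 * norm_sq_eq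

section BernsteinEllipse

variable {ρ : ℝ}

theorem cosh_log_add_mul_I (hρ : 0 < ρ) (θ : ℝ) :
    Complex.cosh (Real.log ρ + θ * Complex.I) =
      ((ρ : ℂ) * Complex.exp (θ * Complex.I) +
        (ρ : ℂ)⁻¹ * Complex.exp (-(θ * Complex.I))) / 2 := by
  have exp_log : Complex.exp (Real.log ρ) = ρ := by
    rw [← Complex.ofReal_exp, Real.exp_log hρ]
  rw [Complex.cosh, neg_add, Complex.exp_add, Complex.exp_add, Complex.exp_neg (Real.log ρ),
    exp_log]

theorem aCoef_eq_cosh_mul_log (k : ℕ) (hρ : 0 < ρ) : aCoef k ρ = Real.cosh (k * Real.log ρ) := by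
  rw [aCoef, Real.cosh_eq, Real.exp_neg, Real.exp_nat_mul, Real.exp_log hρ, inv_pow]

theorem one_lt_aCoef {k : ℕ} (hk : k ≠ 0) (hρ : 1 < ρ) : 1 < aCoef k ρ := by
  have log_pos : 0 < Real.log ρ := Real.log_pos hρ
  rw [aCoef_eq_cosh_mul_log k (zero_lt_one.trans hρ), Real.one_lt_cosh]
  positivity

theorem chebyshevU_abs_sq_general (n : ℕ) (hρ : 0 < ρ) (θ : ℝ)
    (hne : aCoef 2 ρ ≠ Real.cos (2 * θ)) (z : ℂ)
    (hz : z = ((ρ : ℂ) * Complex.exp (θ * Complex.I) +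
        (ρ : ℂ)⁻¹ * Complex.exp (-(θ * Complex.I))) / 2) :
    ‖(U ℂ (n : ℤ)).eval z‖ ^ 2 =
      (aCoef (2 * n + 2) ρ - Real.cos ((2 * n + 2) * θ)) / (aCoef 2 ρ - Real.cos (2 * θ)) := by
  have norm_sq_mul := norm_eval_U_cosh_sq_mul n (Real.log ρ + θ * Complex.I)
  have re_eq : (Real.log ρ + θ * Complex.I : ℂ).re = Real.log ρ := by simp
  have im_eq : (Real.log ρ + θ * Complex.I : ℂ).im = θ := by simp
  rw [cosh_log_add_mul_I hρ, ← hz, re_eq, im_eq] at norm_sq_mul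
  rw [eq_div_iff (sub_ne_zero.mpr hne), aCoef_eq_cosh_mul_log _ hρ, aCoef_eq_cosh_mul_log _ hρ]
  convert norm_sq_mul using 3 <;> push_cast <;> ring

end BernsteinEllipse

/-- for `ρ > 1` and `z = (ρ e^{iθ} + ρ⁻¹ e^{-iθ})/2 ∈ E_ρ`,
`|U_n(z)|² = (a_{2n+2}(ρ) - cos((2n+2)θ)) / (a_2(ρ) - cos(2θ))`. -/
theorem chebyshevU_abs_sq
    (n : ℕ) (ρ : ℝ) (hρ : 1 < ρ) (θ : ℝ) (z : ℂ)
    (hz : z = ((ρ : ℂ) * Complex.exp (θ * Complex.I) +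
        (ρ : ℂ)⁻¹ * Complex.exp (-(θ * Complex.I))) / 2) :
    ‖(Polynomial.Chebyshev.U ℂ (n : ℤ)).eval z‖ ^ 2 =
      (aCoef (2 * n + 2) ρ - Real.cos ((2 * n + 2) * θ)) /
        (aCoef 2 ρ - Real.cos (2 * θ)) := by
  have cos_lt : Real.cos (2 * θ) < aCoef 2 ρ :=
    (Real.cos_le_one _).trans_lt (one_lt_aCoef two_ne_zero hρ)
  exact chebyshevU_abs_sq_general n (zero_lt_one.trans hρ) θ cos_lt.ne' z hz
end

section
/- Let n ≥ 1 be an odd integer and ρ > 1. Then min_{z ∈ E_ρ} |U_n(z)| = (ρ^{n+1} − ρ^{−n−1})/(ρ + ρ⁻¹), and the minimum is attained if and only if z = ± i(ρ − ρ⁻¹)/2, i.e. exactly at the two endpoints of the minor axis of the Bernstein ellipse. -/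
/-!
Writing `z = (u + u⁻¹) / 2` with `‖u‖ = ρ`, the identity
`U_n(z) * (u - u⁻¹) = u ^ (n + 1) - u⁻¹ ^ (n + 1)` reduces the bound to two triangle inequalities:
the right-hand side has norm at least `ρ ^ (n + 1) - ρ⁻¹ ^ (n + 1)`, and `‖u - u⁻¹‖ ≤ ρ + ρ⁻¹`.
The second is an equality exactly when `u` is purely imaginary. For such `u` the number `u⁻¹` is a
negative multiple of `u`, so, `n + 1` being even, `u ^ (n + 1)` and `u⁻¹ ^ (n + 1)` lie on a common
ray and the first is an equality as well.
-/

section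

open Polynomial

theorem eval_chebyshevU_mul_sub {R : Type*} [CommRing R] {x a b : R} (hx : 2 * x = a + b)
    (hab : a * b = 1) (n : ℕ) :
    (Chebyshev.U R n).eval x * (a - b) = a ^ (n + 1) - b ^ (n + 1) := by
  induction n using Nat.twoStepInduction with
  | zero => simp
  | one =>
    simp only [Nat.cast_one, Chebyshev.U_one, eval_mul, eval_ofNat, eval_X, hx]
    ring
  | more n ih ih_succ =>
    push_cast at ih_succ ⊢
    simp only [Chebyshev.U_add_two, eval_sub, eval_mul, eval_ofNat, eval_X, hx]
    linear_combination (a + b) * ih_succ - ih + (a ^ (n + 1) - b ^ (n + 1)) * hab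

theorem norm_sub_inv_le (u : ℂ) : ‖u - u⁻¹‖ ≤ ‖u‖ + ‖u‖⁻¹ :=
  norm_inv u ▸ norm_sub_le u u⁻¹

variable {u : ℂ}

theorem norm_sub_inv_sq (hu : u ≠ 0) :
    ‖u - u⁻¹‖ ^ 2 = (‖u‖ + ‖u‖⁻¹) ^ 2 - (2 * u.re / ‖u‖) ^ 2 := by
  have norm_ne_zero : ‖u‖ ≠ 0 := norm_ne_zero_iff.mpr hu
  have im_sq : u.im ^ 2 = ‖u‖ ^ 2 - u.re ^ 2 := (Complex.sq_norm_sub_sq_re u).symm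
  rw [Complex.sq_norm, Complex.normSq_apply]
  simp only [Complex.sub_re, Complex.sub_im, Complex.inv_re, Complex.inv_im,
    Complex.normSq_eq_norm_sq]
  field_simp
  linear_combination (‖u‖ ^ 2 + 1) ^ 2 * im_sq

theorem norm_sub_inv_eq_iff (hu : u ≠ 0) : ‖u - u⁻¹‖ = ‖u‖ + ‖u‖⁻¹ ↔ u.re = 0 := by
  rw [← sq_eq_sq₀ (norm_nonneg _) (by positivity), norm_sub_inv_sq hu]
  simp [hu]

theorem sameRay_pow_inv_pow (hre : u.re = 0) {m : ℕ} (hm : Even m) :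
    SameRay ℝ (u ^ m) (u⁻¹ ^ m) := by
  have inv_eq : u⁻¹ = (Complex.normSq u)⁻¹ • -u := by
    rw [Complex.inv_def, mul_comm, ← Complex.real_smul]
    congr 1
    apply Complex.ext <;> simp [hre]
  have scale_nonneg : 0 ≤ (Complex.normSq u)⁻¹ ^ m :=
    pow_nonneg (inv_nonneg.mpr (Complex.normSq_nonneg u)) m
  rw [inv_eq, _root_.smul_pow, hm.neg_pow]
  exact SameRay.sameRay_nonneg_smul_right _ scale_nonneg

theorem half_add_inv_eq_minorAxis_iff (hu : u ≠ 0) :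
    ((u + u⁻¹) / 2 = Complex.I * (((‖u‖ - ‖u‖⁻¹) / 2 : ℝ) : ℂ) ∨
      (u + u⁻¹) / 2 = -(Complex.I * (((‖u‖ - ‖u‖⁻¹) / 2 : ℝ) : ℂ))) ↔ u.re = 0 := by
  constructor
  · intro h
    have re_eq_zero : ((u + u⁻¹) / 2).re = 0 := by
      rcases h with h | h <;> simp [h]
    have re_eq : ((u + u⁻¹) / 2).re = (1 + (‖u‖ ^ 2)⁻¹) / 2 * u.re := by
      simp only [Complex.div_ofNat_re, Complex.add_re, Complex.inv_re, Complex.normSq_eq_norm_sq]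
      ring
    exact (mul_eq_zero.mp (re_eq ▸ re_eq_zero)).resolve_left (by positivity)
  · intro hre
    have im_eq : u.im = ‖u‖ ∨ u.im = -‖u‖ :=
      (abs_eq (norm_nonneg u)).mp (Complex.abs_im_eq_norm.mpr hre)
    refine im_eq.imp (fun him => ?_) (fun him => ?_) <;>
    · apply Complex.ext
      · simp [hre]
      · simp only [Complex.div_ofNat_im, Complex.add_im, Complex.inv_im, him,
          Complex.normSq_eq_norm_sq, Complex.neg_im, Complex.I_mul_im, Complex.ofReal_re]
        field_simp
        ring

theorem norm_eval_chebyshevU_mul (hu : u ≠ 0) (n : ℕ) :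
    ‖(Chebyshev.U ℂ n).eval ((u + u⁻¹) / 2)‖ * ‖u - u⁻¹‖ = ‖u ^ (n + 1) - u⁻¹ ^ (n + 1)‖ := by
  rw [← norm_mul, eval_chebyshevU_mul_sub (by ring) (mul_inv_cancel₀ hu)]

theorem pow_sub_inv_pow_le_norm_eval_chebyshevU_mul (hu : u ≠ 0) (n : ℕ) :
    ‖u‖ ^ (n + 1) - ‖u‖⁻¹ ^ (n + 1) ≤
      ‖(Chebyshev.U ℂ n).eval ((u + u⁻¹) / 2)‖ * ‖u - u⁻¹‖ := by
  rw [norm_eval_chebyshevU_mul hu]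
  simpa only [norm_pow, norm_inv] using norm_sub_norm_le (u ^ (n + 1)) (u⁻¹ ^ (n + 1))

theorem le_norm_eval_chebyshevU (hu : u ≠ 0) (n : ℕ) :
    (‖u‖ ^ (n + 1) - ‖u‖⁻¹ ^ (n + 1)) / (‖u‖ + ‖u‖⁻¹) ≤
      ‖(Chebyshev.U ℂ n).eval ((u + u⁻¹) / 2)‖ := by
  rw [div_le_iff₀ (by positivity)]
  exact (pow_sub_inv_pow_le_norm_eval_chebyshevU_mul hu n).trans <|
    mul_le_mul_of_nonneg_left (norm_sub_inv_le u) (norm_nonneg _)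

theorem re_eq_zero_of_norm_eval_chebyshevU_eq (hu : 1 < ‖u‖) {n : ℕ}
    (h : ‖(Chebyshev.U ℂ n).eval ((u + u⁻¹) / 2)‖ =
      (‖u‖ ^ (n + 1) - ‖u‖⁻¹ ^ (n + 1)) / (‖u‖ + ‖u‖⁻¹)) :
    u.re = 0 := by
  have u_ne_zero : u ≠ 0 := norm_pos_iff.mp (zero_lt_one.trans hu)
  have pow_lt : ‖u‖⁻¹ ^ (n + 1) < ‖u‖ ^ (n + 1) :=
    pow_lt_pow_left₀ ((inv_lt_one_of_one_lt₀ hu).trans hu) (by positivity) n.succ_ne_zero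
  have eval_pos : 0 < ‖(Chebyshev.U ℂ n).eval ((u + u⁻¹) / 2)‖ :=
    h ▸ div_pos (sub_pos.mpr pow_lt) (by positivity)
  have le_norm_sub_inv : ‖u‖ + ‖u‖⁻¹ ≤ ‖u - u⁻¹‖ := by
    refine le_of_mul_le_mul_left ?_ eval_pos
    rw [(eq_div_iff (by positivity)).mp h]
    exact pow_sub_inv_pow_le_norm_eval_chebyshevU_mul u_ne_zero n
  exact (norm_sub_inv_eq_iff u_ne_zero).mp ((norm_sub_inv_le u).antisymm le_norm_sub_inv)

theorem norm_eval_chebyshevU_of_re_eq_zero (hu : 1 ≤ ‖u‖) (hre : u.re = 0) {n : ℕ}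
    (hn : Odd n) :
    ‖(Chebyshev.U ℂ n).eval ((u + u⁻¹) / 2)‖ =
      (‖u‖ ^ (n + 1) - ‖u‖⁻¹ ^ (n + 1)) / (‖u‖ + ‖u‖⁻¹) := by
  have u_ne_zero : u ≠ 0 := norm_pos_iff.mp (zero_lt_one.trans_le hu)
  have pow_le : ‖u‖⁻¹ ^ (n + 1) ≤ ‖u‖ ^ (n + 1) :=
    pow_le_pow_left₀ (by positivity) ((inv_le_one_of_one_le₀ hu).trans hu) _
  rw [eq_div_iff (by positivity), ← (norm_sub_inv_eq_iff u_ne_zero).mpr hre,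
    norm_eval_chebyshevU_mul u_ne_zero, (sameRay_pow_inv_pow hre hn.add_one).norm_sub, norm_pow,
    norm_pow, norm_inv, abs_of_nonneg (sub_nonneg.mpr pow_le)]

end

/-- for odd `n ≥ 1` and `ρ > 1`,
`min_{z ∈ E_ρ} |U_n(z)| = (ρ^{n+1} - ρ^{-(n+1)})/(ρ + ρ⁻¹)`, attained if and only if
`z = ± i(ρ - ρ⁻¹)/2`, the two endpoints of the minor axis. -/
theorem chebyshevU_min_odd
    (n : ℕ) (hn : 1 ≤ n) (hodd : Odd n) (ρ : ℝ) (hρ : 1 < ρ) :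
    ∀ z ∈ bernsteinEllipse ρ,
      (ρ ^ (n + 1) - ρ⁻¹ ^ (n + 1)) / (ρ + ρ⁻¹) ≤
        ‖(Polynomial.Chebyshev.U ℂ (n : ℤ)).eval z‖ ∧
      (‖(Polynomial.Chebyshev.U ℂ (n : ℤ)).eval z‖ =
          (ρ ^ (n + 1) - ρ⁻¹ ^ (n + 1)) / (ρ + ρ⁻¹) ↔
        z = Complex.I * (((ρ - ρ⁻¹) / 2 : ℝ) : ℂ) ∨
        z = -(Complex.I * (((ρ - ρ⁻¹) / 2 : ℝ) : ℂ))) := by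
  rintro _ ⟨u, rfl, rfl⟩
  have u_ne_zero : u ≠ 0 := norm_pos_iff.mp (zero_lt_one.trans hρ)
  refine ⟨le_norm_eval_chebyshevU u_ne_zero n, ?_⟩
  rw [half_add_inv_eq_minorAxis_iff u_ne_zero]
  exact ⟨re_eq_zero_of_norm_eval_chebyshevU_eq hρ,
    fun hre => norm_eval_chebyshevU_of_re_eq_zero hρ.le hre hodd⟩
end

section
/- Let 0 < t < s < 1, let ρ ≥ (√2 + √6)/2, and set b = (ρ − ρ⁻¹)/2. Then for every z on the Bernstein ellipse E_ρ one has |z² − s²| · (b² + t²) ≤ (b² + s²) · |z² − t²|; that is, the maximum over E_ρ of |(z² − s²)/(z² − t²)| is attained at the two endpoints ± i b of the minor axis, where its value is (b² + s²)/(b² + t²). -/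
/-!
On an ellipse with semi-axes `a, b` and foci `± 1`, the point `z = a cos θ + i b sin θ` satisfies
`|z² - c|² = (b² + c)² + k (k + 2b² - 2c(2b² + 1))` with `k = cos² θ`, and `k = 0` gives the
endpoints of the minor axis. Comparing `c = s²` with `c = t²`, the difference of the two sides of
the squared inequality is `k (s² - t²)` times the cofactor
`k (2b² + s² + t²) + 2 (b² (2b² + s² + t²) + (2b² + 1)(b⁴ - s²t²))`. Since `s² + t² ≥ 2st`, the
part free of `k` is at least `2 (b² + st) (b² (2b² + 3) - (2b² + 1) st)`, so it is enough that
`st (2b² + 1) ≤ b² (2b² + 3)`. For `st ≤ 1` this follows from `b² ≥ 1/2`, because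
`b² (2b² + 3) - (2b² + 1) = (2b² - 1)(b² + 1)`.
-/

open Complex

theorem exists_eq_cos_add_sin_mul_I_of_mem_bernsteinEllipse {ρ : ℝ} {z : ℂ}
    (hz : z ∈ bernsteinEllipse ρ) :
    ∃ θ : ℝ, z = ↑((ρ + ρ⁻¹) / 2 * Real.cos θ) + ↑((ρ - ρ⁻¹) / 2 * Real.sin θ) * I := by
  obtain ⟨u, rfl, rfl⟩ := hz
  have hu : u = ‖u‖ * exp (u.arg * I) := (norm_mul_exp_arg_mul_I u).symm
  have hu_inv : u⁻¹ = (‖u‖ : ℂ)⁻¹ * exp (-u.arg * I) := by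
    rw [neg_mul, exp_neg, ← mul_inv, ← hu]
  refine ⟨u.arg, ?_⟩
  rw [hu_inv]
  nth_rewrite 1 [hu]
  rw [exp_mul_I, exp_mul_I, cos_neg, sin_neg]
  push_cast
  ring

theorem sq_norm_add_mul_I_sq_sub (x y c : ℝ) :
    ‖(x + y * I : ℂ) ^ 2 - c‖ ^ 2 = (x ^ 2 - y ^ 2 - c) ^ 2 + 4 * x ^ 2 * y ^ 2 := by
  have hz : (x + y * I : ℂ) ^ 2 - c = ↑(x ^ 2 - y ^ 2 - c) + ↑(2 * x * y) * I := by
    push_cast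
    linear_combination (y : ℂ) ^ 2 * I_sq
  rw [hz, Complex.sq_norm, normSq_add_mul_I]
  ring

theorem sq_norm_ellipse_point_sq_sub {a b : ℝ} (hab : a ^ 2 = b ^ 2 + 1) (θ c : ℝ) :
    ‖(↑(a * Real.cos θ) + ↑(b * Real.sin θ) * I : ℂ) ^ 2 - c‖ ^ 2 =
      (b ^ 2 + c) ^ 2 +
        Real.cos θ ^ 2 * (Real.cos θ ^ 2 + 2 * b ^ 2 - 2 * c * (2 * b ^ 2 + 1)) := by
  rw [sq_norm_add_mul_I_sq_sub, mul_pow, mul_pow, hab, Real.sin_sq]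
  ring

theorem cofactor_nonneg_of_mul_le {B s t : ℝ} (hB : 0 ≤ B) (hst_nonneg : 0 ≤ s * t)
    (hst : s * t * (2 * B + 1) ≤ B * (2 * B + 3)) :
    0 ≤ B * (2 * B + s ^ 2 + t ^ 2) + (2 * B + 1) * (B ^ 2 - (s * t) ^ 2) := by
  calc 0 ≤ (B + s * t) * (B * (2 * B + 3) - s * t * (2 * B + 1)) :=
        mul_nonneg (add_nonneg hB hst_nonneg) (sub_nonneg.2 hst)
    _ = B * (2 * B + 2 * s * t) + (2 * B + 1) * (B ^ 2 - (s * t) ^ 2) := by ring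
    _ ≤ B * (2 * B + s ^ 2 + t ^ 2) + (2 * B + 1) * (B ^ 2 - (s * t) ^ 2) := by
        have := two_mul_le_add_sq s t
        rw [add_assoc (2 * B)]
        gcongr

theorem norm_ellipse_point_sq_sub_sq_mul_le {a b s t : ℝ} (hab : a ^ 2 = b ^ 2 + 1)
    (ht : 0 ≤ t) (hts : t ≤ s)
    (hst : s * t * (2 * b ^ 2 + 1) ≤ b ^ 2 * (2 * b ^ 2 + 3)) (θ : ℝ) :
    ‖(↑(a * Real.cos θ) + ↑(b * Real.sin θ) * I : ℂ) ^ 2 - (s : ℂ) ^ 2‖ * (b ^ 2 + t ^ 2) ≤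
      (b ^ 2 + s ^ 2) *
        ‖(↑(a * Real.cos θ) + ↑(b * Real.sin θ) * I : ℂ) ^ 2 - (t : ℂ) ^ 2‖ := by
  refine le_of_sq_le_sq ?_ (by positivity)
  rw [mul_pow, mul_pow, ← ofReal_pow s, ← ofReal_pow t, sq_norm_ellipse_point_sq_sub hab,
    sq_norm_ellipse_point_sq_sub hab]
  set k := Real.cos θ ^ 2
  have hk : 0 ≤ k := sq_nonneg _
  have hts_sq : 0 ≤ s ^ 2 - t ^ 2 := sub_nonneg.2 (pow_le_pow_left₀ ht hts 2)
  have hcofactor := cofactor_nonneg_of_mul_le (sq_nonneg b) (mul_nonneg (ht.trans hts) ht) hst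
  have hdiff : 0 ≤ k * (s ^ 2 - t ^ 2) * (k * (2 * b ^ 2 + s ^ 2 + t ^ 2) +
      2 * (b ^ 2 * (2 * b ^ 2 + s ^ 2 + t ^ 2) +
        (2 * b ^ 2 + 1) * ((b ^ 2) ^ 2 - (s * t) ^ 2))) :=
    mul_nonneg (mul_nonneg hk hts_sq) (by positivity)
  linear_combination hdiff

theorem norm_I_mul_sq_sub_sq (b r : ℝ) : ‖(I * (b : ℂ)) ^ 2 - (r : ℂ) ^ 2‖ = b ^ 2 + r ^ 2 := by
  have hreal : (I * (b : ℂ)) ^ 2 - (r : ℂ) ^ 2 = -((b ^ 2 + r ^ 2 : ℝ) : ℂ) := by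
    rw [mul_pow, I_sq]
    push_cast
    ring
  rw [hreal, norm_neg, Complex.norm_of_nonneg (by positivity)]

theorem max_rational_at_minor_axis_general {s t ρ : ℝ} (ht : 0 < t) (hts : t ≤ s) (hρ : 0 < ρ)
    (hst : s * t * (2 * ((ρ - ρ⁻¹) / 2) ^ 2 + 1) ≤
      ((ρ - ρ⁻¹) / 2) ^ 2 * (2 * ((ρ - ρ⁻¹) / 2) ^ 2 + 3)) :
    (∀ z ∈ bernsteinEllipse ρ,
      ‖z ^ 2 - (s : ℂ) ^ 2‖ * (((ρ - ρ⁻¹) / 2) ^ 2 + t ^ 2) ≤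
        (((ρ - ρ⁻¹) / 2) ^ 2 + s ^ 2) * ‖z ^ 2 - (t : ℂ) ^ 2‖) ∧
    ‖(I * (((ρ - ρ⁻¹) / 2 : ℝ) : ℂ)) ^ 2 - (s : ℂ) ^ 2‖ /
        ‖(I * (((ρ - ρ⁻¹) / 2 : ℝ) : ℂ)) ^ 2 - (t : ℂ) ^ 2‖ =
      (((ρ - ρ⁻¹) / 2) ^ 2 + s ^ 2) / (((ρ - ρ⁻¹) / 2) ^ 2 + t ^ 2) := by
  have hab : ((ρ + ρ⁻¹) / 2) ^ 2 = ((ρ - ρ⁻¹) / 2) ^ 2 + 1 := by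
    linear_combination mul_inv_cancel₀ hρ.ne'
  refine ⟨fun z hz => ?_, by rw [norm_I_mul_sq_sub_sq, norm_I_mul_sq_sub_sq]⟩
  obtain ⟨θ, rfl⟩ := exists_eq_cos_add_sin_mul_I_of_mem_bernsteinEllipse hz
  exact norm_ellipse_point_sq_sub_sq_mul_le hab ht.le hts hst θ

theorem sqrt_two_add_sqrt_six_div_two_inv : ((√2 + √6) / 2)⁻¹ = (√6 - √2) / 2 := by
  have h2 : √2 ^ 2 = 2 := Real.sq_sqrt (by norm_num)
  have h6 : √6 ^ 2 = 6 := Real.sq_sqrt (by norm_num)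
  exact inv_eq_of_mul_eq_one_right (by linear_combination (h6 - h2) / 4)

theorem half_le_semiminor_axis_sq {ρ : ℝ} (hρ : (√2 + √6) / 2 ≤ ρ) :
    1 / 2 ≤ ((ρ - ρ⁻¹) / 2) ^ 2 := by
  have hρ_inv : ρ⁻¹ ≤ (√6 - √2) / 2 :=
    sqrt_two_add_sqrt_six_div_two_inv ▸ inv_anti₀ (by positivity) hρ
  calc 1 / 2 = (√2 / 2) ^ 2 := by rw [div_pow, Real.sq_sqrt zero_le_two]; norm_num
    _ ≤ ((ρ - ρ⁻¹) / 2) ^ 2 := by gcongr; linarith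

theorem mul_two_mul_add_one_le_of_half_le {B p : ℝ} (hB : 1 / 2 ≤ B) (hp : p ≤ 1) :
    p * (2 * B + 1) ≤ B * (2 * B + 3) := by
  calc p * (2 * B + 1) ≤ 1 * (2 * B + 1) := by gcongr
    _ ≤ B * (2 * B + 3) := by nlinarith

/-- for `0 < t < s < 1` and `ρ ≥ (√2 + √6)/2`, with `b = (ρ - ρ⁻¹)/2`, for every
`z ∈ E_ρ` one has `|z² - s²| (b² + t²) ≤ (b² + s²) |z² - t²|`; i.e. the maximum over `E_ρ` of
`|(z² - s²)/(z² - t²)|` is attained at the endpoints `± i b` of the minor axis, where its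
value is `(b² + s²)/(b² + t²)`. -/
theorem max_rational_at_minor_axis
    (s t ρ : ℝ) (ht : 0 < t) (hts : t < s) (hs : s < 1)
    (hρ : (Real.sqrt 2 + Real.sqrt 6) / 2 ≤ ρ) :
    (∀ z ∈ bernsteinEllipse ρ,
      ‖z ^ 2 - (s : ℂ) ^ 2‖ * (((ρ - ρ⁻¹) / 2) ^ 2 + t ^ 2) ≤
        (((ρ - ρ⁻¹) / 2) ^ 2 + s ^ 2) * ‖z ^ 2 - (t : ℂ) ^ 2‖) ∧
    ‖(Complex.I * (((ρ - ρ⁻¹) / 2 : ℝ) : ℂ)) ^ 2 - (s : ℂ) ^ 2‖ /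
        ‖(Complex.I * (((ρ - ρ⁻¹) / 2 : ℝ) : ℂ)) ^ 2 - (t : ℂ) ^ 2‖ =
      (((ρ - ρ⁻¹) / 2) ^ 2 + s ^ 2) / (((ρ - ρ⁻¹) / 2) ^ 2 + t ^ 2) := by
  have hst : s * t ≤ 1 := mul_le_one₀ hs.le ht.le (hts.trans hs).le
  exact max_rational_at_minor_axis_general ht hts.le (lt_of_lt_of_le (by positivity) hρ)
    (mul_two_mul_add_one_le_of_half_le (half_le_semiminor_axis_sq hρ) hst)
end

section
/- Let n ≥ 2 be an integer, let ρ ≥ (√2 + √6)/2, and let λ satisfy either λ > 1, or 0 < λ < 1 with n odd. Then for every z on the Bernstein ellipse E_ρ, |C_n^λ(z)| ≥ |C_n^λ(i(ρ − ρ⁻¹)/2)| = |C_n^λ(−i(ρ − ρ⁻¹)/2)|; that is, the minimum of |C_n^λ| over E_ρ is attained at the two endpoints ± i(ρ − ρ⁻¹)/2 of the minor axis. -/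
/-- The Gegenbauer polynomial `C_n^λ(z)` of a complex variable:
`C_n^λ(z) = ∑_{k=0}^{⌊n/2⌋} (-1)^k [Γ(n-k+λ)/(Γ(λ) k! (n-2k)!)] (2z)^{n-2k}`. -/
noncomputable def gegenbauerC (lam : ℝ) (n : ℕ) (z : ℂ) : ℂ :=
  ∑ k ∈ Finset.range (n / 2 + 1),
    (-1 : ℂ) ^ k *
      ((Real.Gamma ((n : ℝ) - k + lam) /
        (Real.Gamma lam * (Nat.factorial k) * (Nat.factorial (n - 2 * k))) : ℝ) : ℂ) *
      (2 * z) ^ (n - 2 * k)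

/-!
Up to the factor `z` for odd `n`, `C_n^λ(z)` is a polynomial `q` in `s = z²` solving a
hypergeometric equation. By Rolle's theorem applied to its Sturm–Liouville form, all zeros of `q`
are simple and lie in `(0, 1)`. They are the equilibrium positions of unit charges between fixed
charges at `0` and `1`; raising `λ` raises the charge at `1`, which pushes every zero towards `0`.

Put `y = (ρ - ρ⁻¹) / 2`. Squaring maps `E_ρ` to the ellipse `|w| + |w - 1| = 2y² + 1`, on which
the ratio `|w - s| / |-y² - s|` is decreasing in `s ∈ [0, 1]` as soon as `y² ≥ 1/2`, which is
precisely the condition `ρ ≥ (√2 + √6)/2`. Hence `|C_n^λ(z)| / |C_n^λ(iy)|` increases with `λ`,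
and it suffices to show that it is at least `1` in the limit `λ → 0` for odd `n` and at `λ = 1`
for even `n`. There the polynomials are multiples of the Chebyshev polynomials `T_n` and `U_n`,
whose values at `(u + u⁻¹) / 2` are explicit.
-/

namespace Gegenbauer

open Polynomial

/-! ### Polynomial solutions of the hypergeometric equation -/

/-- `q` solves the hypergeometric equation
`s (1 - s) q'' + (c - (a + b + 1) s) q' - a b q = 0` with `a = -m`, `b = m - 1 + γ + δ` and `c = γ`.
The parametrization by `m`, `γ`, `δ` is chosen so that the polynomial solutions have degree at most
`m` and are orthogonal for the weight `s ^ (γ - 1) * (1 - s) ^ (δ - 1)` on `(0, 1)`. -/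
def IsHypergeometricSol {R : Type*} [CommRing R] (m : ℕ) (γ δ : R) (q : R[X]) : Prop :=
  X * (1 - X) * derivative (derivative q) + (C γ - C (γ + δ) * X) * derivative q
    + C (m * (m - 1 + γ + δ)) * q = 0

namespace IsHypergeometricSol

section CommRing

variable {R : Type*} [CommRing R] {m : ℕ} {γ δ : R} {q : R[X]}

theorem iff_coeff : IsHypergeometricSol m γ δ q ↔ ∀ k : ℕ,
    (k + 1) * (k + γ) * q.coeff (k + 1) = (k - m) * (k + m + γ + δ - 1) * q.coeff k := by
  have expanded : X * (1 - X) * derivative (derivative q) + (C γ - C (γ + δ) * X) * derivative q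
        + C (m * (m - 1 + γ + δ)) * q =
      derivative (derivative q) * X - derivative (derivative q) * X * X + C γ * derivative q
        - C (γ + δ) * (derivative q * X) + C (m * (m - 1 + γ + δ)) * q := by ring
  rw [IsHypergeometricSol, expanded, Polynomial.ext_iff]
  refine forall_congr' fun k ↦ ?_
  rw [coeff_zero, ← sub_eq_zero (a := (_ : R) * q.coeff (k + 1))]
  refine Eq.congr_left ?_
  rcases k with _ | _ | k <;>
    simp only [coeff_add, coeff_sub, coeff_C_mul, coeff_mul_X, coeff_derivative, mul_coeff_zero,
      coeff_X_zero, coeff_C_zero] <;>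
    push_cast <;> ring

theorem derivative (hq : IsHypergeometricSol (m + 1) γ δ q) :
    IsHypergeometricSol m (γ + 1) (δ + 1) (derivative q) := by
  have := congrArg Polynomial.derivative hq
  simp only [IsHypergeometricSol, derivative_mul, derivative_X, derivative_one, derivative_C,
    derivative_natCast, derivative_zero, map_add, map_sub, map_mul, map_one, map_natCast,
    Nat.cast_add, Nat.cast_one] at this ⊢
  linear_combination this

theorem of_C_mul [IsDomain R] {a : R} (ha : a ≠ 0) (hq : IsHypergeometricSol m γ δ (C a * q)) :
    IsHypergeometricSol m γ δ q := by
  rw [iff_coeff] at hq ⊢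
  intro k
  have := hq k
  rw [coeff_C_mul, coeff_C_mul] at this
  exact mul_left_cancel₀ ha (by linear_combination this)

end CommRing

variable {m : ℕ} {γ δ : ℝ} {q : ℝ[X]}

theorem natDegree_le (hγ : 0 < γ) (hq : IsHypergeometricSol m γ δ q) : q.natDegree ≤ m := by
  rw [iff_coeff] at hq
  refine natDegree_le_iff_coeff_eq_zero.2 fun k hk ↦ ?_
  induction k, hk using Nat.le_induction with
  | base => simpa [(by positivity : (m : ℝ) + 1 ≠ 0), (by positivity : (m : ℝ) + γ ≠ 0)] using hq m
  | succ k _ ih =>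
    simpa [ih, (by positivity : (k : ℝ) + 1 ≠ 0), (by positivity : (k : ℝ) + γ ≠ 0)] using hq k

/-! ### The zeros lie in `(0, 1)` and are simple -/

/-- The Sturm–Liouville form of the equation. -/
theorem hasDerivAt_weight_mul_derivative (hq : IsHypergeometricSol m γ δ q) {x : ℝ}
    (hx : x ∈ Set.Ioo 0 1) :
    HasDerivAt (fun s ↦ s ^ γ * (1 - s) ^ δ * (Polynomial.derivative q).eval s)
      (-(m * (m - 1 + γ + δ)) * (x ^ (γ - 1) * (1 - x) ^ (δ - 1)) * q.eval x) x := by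
  have hx₀ : x ≠ 0 := hx.1.ne'
  have hx₁ : 1 - x ≠ 0 := (sub_pos.2 hx.2).ne'
  have hpow₀ : HasDerivAt (fun s : ℝ ↦ s ^ γ) (γ * x ^ (γ - 1)) x :=
    Real.hasDerivAt_rpow_const (.inl hx₀)
  have hpow₁ : HasDerivAt (fun s : ℝ ↦ (1 - s) ^ δ) (-1 * δ * (1 - x) ^ (δ - 1)) x :=
    ((hasDerivAt_id x).const_sub 1).rpow_const (.inl hx₁)
  refine ((hpow₀.mul hpow₁).mul ((Polynomial.derivative q).hasDerivAt x)).congr_deriv ?_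
  have heq := congrArg (eval x) hq
  simp only [eval_add, eval_sub, eval_mul, eval_X, eval_C, eval_one, eval_zero] at heq
  have hγ : x ^ γ = x ^ (γ - 1) * x := by rw [Real.rpow_sub_one hx₀, div_mul_cancel₀ _ hx₀]
  have hδ : (1 - x) ^ δ = (1 - x) ^ (δ - 1) * (1 - x) := by
    rw [Real.rpow_sub_one hx₁, div_mul_cancel₀ _ hx₁]
  simp only [Pi.mul_apply, hγ, hδ]
  linear_combination x ^ (γ - 1) * (1 - x) ^ (δ - 1) * heq

theorem exists_isRoot_of_weight_mul_derivative_eq_zero (hγ : 0 < γ) (hδ : 0 < δ)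
    (hq : IsHypergeometricSol (m + 1) γ δ q) {a b : ℝ} (ha : 0 ≤ a) (hab : a < b) (hb : b ≤ 1)
    (hfa : a ^ γ * (1 - a) ^ δ * (Polynomial.derivative q).eval a = 0)
    (hfb : b ^ γ * (1 - b) ^ δ * (Polynomial.derivative q).eval b = 0) :
    ∃ x ∈ Set.Ioo a b, q.IsRoot x := by
  have hsub : Set.Ioo a b ⊆ Set.Ioo 0 1 := Set.Ioo_subset_Ioo ha hb
  have hcont : Continuous fun s ↦ s ^ γ * (1 - s) ^ δ * (Polynomial.derivative q).eval s :=
    ((Real.continuous_rpow_const hγ.le).mul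
      ((Real.continuous_rpow_const hδ.le).comp (continuous_const.sub continuous_id))).mul
      (Polynomial.continuous _)
  obtain ⟨x, hx, hx'⟩ := exists_hasDerivAt_eq_zero hab hcont.continuousOn (hfa.trans hfb.symm)
    fun x hx ↦ hq.hasDerivAt_weight_mul_derivative (hsub hx)
  have hx₀ : 0 < x := (hsub hx).1
  have hx₁ : 0 < 1 - x := sub_pos.2 (hsub hx).2
  refine ⟨x, hx, (mul_eq_zero.1 hx').resolve_left (mul_ne_zero (neg_ne_zero.2 ?_) ?_)⟩
  · push_cast
    rw [add_sub_cancel_right]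
    positivity
  · positivity

end IsHypergeometricSol

theorem exists_strictMono_mem_Ioo {α : Type*} [Preorder α] {m : ℕ} {p : Fin (m + 1) → α}
    {P : α → Prop}
    (hP : ∀ j : Fin m, ∃ x ∈ Set.Ioo (p j.castSucc) (p j.succ), P x) :
    ∃ y : Fin m → α, StrictMono y ∧
      ∀ j, y j ∈ Set.Ioo (p j.castSucc) (p j.succ) ∧ P (y j) := by
  choose y hy using hP
  refine ⟨y, ?_, hy⟩
  rcases m with _ | m
  · exact Subsingleton.strictMono y
  · refine Fin.strictMono_iff_lt_succ.2 fun j ↦ (hy j.castSucc).1.2.trans ?_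
    simpa only [Fin.succ_castSucc] using (hy j.succ).1.1

theorem eq_C_leadingCoeff_mul_nodal {K : Type*} [Field K] {m : ℕ} {c : Fin m → K}
    (hc : Function.Injective c) {p : K[X]} (hdeg : p.natDegree ≤ m) (hroot : ∀ j, p.IsRoot (c j)) :
    p = C p.leadingCoeff * Lagrange.nodal Finset.univ c := by
  refine eq_leadingCoeff_mul_of_monic_of_dvd_of_natDegree_le Lagrange.nodal_monic ?_ ?_
  · exact Finset.prod_dvd_of_coprime
      (fun i _ j _ hij ↦ pairwise_coprime_X_sub_C hc hij) fun j _ ↦ dvd_iff_isRoot.2 (hroot j)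
  · simpa using hdeg

theorem IsHypergeometricSol.exists_eq_C_mul_nodal {m : ℕ} {γ δ : ℝ} {q : ℝ[X]} (hγ : 0 < γ)
    (hδ : 0 < δ) (hq : IsHypergeometricSol m γ δ q) :
    ∃ (a : ℝ) (c : Fin m → ℝ), StrictMono c ∧ (∀ j, c j ∈ Set.Ioo 0 1) ∧
      q = C a * Lagrange.nodal Finset.univ c := by
  induction m generalizing γ δ q with
  | zero =>
    refine ⟨q.coeff 0, Fin.elim0, Subsingleton.strictMono _, fun j ↦ j.elim0, ?_⟩
    rw [Finset.univ_eq_empty, Lagrange.nodal_empty, mul_one]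
    exact eq_C_of_natDegree_le_zero (hq.natDegree_le hγ)
  | succ m ih =>
    obtain ⟨a, c, hc, hc01, hq'⟩ := ih (by positivity) (by positivity) hq.derivative
    let p : Fin (m + 2) → ℝ := Fin.cons 0 (Fin.snoc c 1)
    have hp : StrictMono p := by
      rw [Fin.strictMono_cons, ← Fin.insertNth_last', Fin.strictMono_insertNth_iff]
      refine ⟨fun j ↦ ?_, hc, fun j _ ↦ (hc01 j).2, fun j hj ↦ ?_⟩
      · induction j using Fin.lastCases with
        | last => simp
        | cast j => simpa using (hc01 j).1
      · exact absurd hj (Fin.castSucc_lt_last j).not_ge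
    have hp_zero (j : Fin (m + 2)) :
        p j ^ γ * (1 - p j) ^ δ * (Polynomial.derivative q).eval (p j) = 0 := by
      induction j using Fin.cases with
      | zero => simp [p, hγ.ne']
      | succ j =>
        induction j using Fin.lastCases with
        | last => simp [p, hδ.ne']
        | cast j => simp [p, hq', Lagrange.eval_nodal_at_node]
    have hp₀ (j : Fin (m + 2)) : 0 ≤ p j := hp.monotone (Fin.zero_le j)
    have hp₁ (j : Fin (m + 2)) : p j ≤ 1 := by simpa [p] using hp.monotone (Fin.le_last j)
    obtain ⟨y, hy, hy'⟩ := exists_strictMono_mem_Ioo fun j : Fin (m + 1) ↦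
      hq.exists_isRoot_of_weight_mul_derivative_eq_zero hγ hδ (hp₀ _) (hp Fin.castSucc_lt_succ)
        (hp₁ _) (hp_zero _) (hp_zero _)
    exact ⟨q.leadingCoeff, y, hy, fun j ↦ Set.Ioo_subset_Ioo (hp₀ _) (hp₁ _) (hy' j).1,
      eq_C_leadingCoeff_mul_nodal hy.injective (hq.natDegree_le hγ) fun j ↦ (hy' j).2⟩

/-! ### Monotonicity of the zeros -/

theorem eval_derivative_nodal_eq_mul_sum_inv {K ι : Type*} [Field K] {s : Finset ι}
    {c : ι → K} {x : K} (hx : ∀ k ∈ s, x ≠ c k) :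
    (derivative (Lagrange.nodal s c)).eval x =
      (Lagrange.nodal s c).eval x * ∑ k ∈ s, (x - c k)⁻¹ := by
  classical
  rw [Lagrange.derivative_nodal, eval_finsetSum, Finset.mul_sum]
  refine Finset.sum_congr rfl fun k hk ↦ ?_
  rw [Lagrange.nodal_eq_mul_nodal_erase hk, eval_mul, eval_sub, eval_X, eval_C, mul_right_comm,
    mul_inv_cancel₀ (sub_ne_zero.2 (hx k hk)), one_mul]

/-- Stieltjes' electrostatic equilibrium: the zeros are unit charges on `(0, 1)`, repelled by each
other and by charges `γ / 2` at `0` and `δ / 2` at `1`. -/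
theorem IsHypergeometricSol.two_mul_sum_inv_sub {ι : Type*} [Fintype ι] [DecidableEq ι] {m : ℕ}
    {γ δ : ℝ} {c : ι → ℝ} (hq : IsHypergeometricSol m γ δ (Lagrange.nodal Finset.univ c))
    (hc : Function.Injective c) {j : ι} (hj : c j ∈ Set.Ioo 0 1) :
    2 * ∑ k ∈ Finset.univ.erase j, (c j - c k)⁻¹ = δ / (1 - c j) - γ / c j := by
  have hne : ∀ k ∈ Finset.univ.erase j, c j ≠ c k := fun k hk ↦
    hc.ne (Finset.ne_of_mem_erase hk).symm
  have heq := congrArg (eval (c j)) hq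
  rw [Lagrange.nodal_eq_mul_nodal_erase (Finset.mem_univ j)] at heq
  simp only [derivative_mul, derivative_add, derivative_sub, derivative_X, derivative_C,
    derivative_one, eval_add, eval_mul, eval_sub, eval_X, eval_C, eval_one, eval_zero, sub_self,
    sub_zero, eval_derivative_nodal_eq_mul_sum_inv hne] at heq
  have hbalance : c j * (1 - c j) * (2 * ∑ k ∈ Finset.univ.erase j, (c j - c k)⁻¹)
      + (γ - (γ + δ) * c j) = 0 := by
    refine (mul_eq_zero.1 ?_).resolve_left (Lagrange.eval_nodal_not_at_node hne)
    linear_combination heq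
  have hj₀ : c j ≠ 0 := hj.1.ne'
  have hj₁ : 1 - c j ≠ 0 := (sub_pos.2 hj.2).ne'
  rw [div_sub_div _ _ hj₁ hj₀, eq_div_iff (mul_ne_zero hj₁ hj₀)]
  linear_combination hbalance

theorem IsHypergeometricSol.node_le_node {ι : Type*} [Fintype ι] [LinearOrder ι] {m : ℕ}
    {γ δ δ' : ℝ} {c c' : ι → ℝ} (hγ : 0 < γ) (hδ : 0 ≤ δ) (hδδ' : δ ≤ δ')
    (hq : IsHypergeometricSol m γ δ (Lagrange.nodal Finset.univ c))
    (hq' : IsHypergeometricSol m γ δ' (Lagrange.nodal Finset.univ c'))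
    (hc : StrictMono c) (hc' : StrictMono c')
    (hc01 : ∀ j, c j ∈ Set.Ioo 0 1) (hc01' : ∀ j, c' j ∈ Set.Ioo 0 1) (j : ι) : c' j ≤ c j := by
  -- At an index where `c' - c` is maximal and positive, moving from `c` to `c'` decreases the
  -- repulsion by the other zeros but increases the net repulsion by the end points.
  by_contra! hj
  obtain ⟨i, -, hi⟩ := Finset.exists_max_image Finset.univ (fun k ↦ c' k - c k)
    ⟨j, Finset.mem_univ j⟩
  have hlt : c i < c' i := by linarith [hi j (Finset.mem_univ j)]
  have hsum : ∑ k ∈ Finset.univ.erase i, (c' i - c' k)⁻¹ ≤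
      ∑ k ∈ Finset.univ.erase i, (c i - c k)⁻¹ := by
    refine Finset.sum_le_sum fun k hk ↦ ?_
    have hgap : c i - c k ≤ c' i - c' k := by linarith [hi k (Finset.mem_univ k)]
    rcases lt_or_gt_of_ne (Finset.ne_of_mem_erase hk) with hki | hik
    · exact inv_anti₀ (sub_pos.2 (hc hki)) hgap
    · exact (inv_le_inv_of_neg (sub_neg.2 (hc' hik)) (sub_neg.2 (hc hik))).2 hgap
  have hleft : γ / c' i < γ / c i := div_lt_div_of_pos_left hγ (hc01 i).1 hlt
  have hright : δ / (1 - c i) ≤ δ' / (1 - c' i) :=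
    div_le_div₀ (hδ.trans hδδ') hδδ' (sub_pos.2 (hc01' i).2) (by linarith)
  linarith [hq.two_mul_sum_inv_sub hc.injective (hc01 i),
    hq'.two_mul_sum_inv_sub hc'.injective (hc01' i)]

/-! ### Ratios along an ellipse with foci `0` and `1` -/

/-- Stewart's theorem in the triangle `0`, `1`, `w`. -/
theorem norm_sub_ofReal_sq (w : ℂ) (s : ℝ) :
    ‖w - s‖ ^ 2 = (1 - s) * ‖w‖ ^ 2 + s * ‖w - 1‖ ^ 2 - s * (1 - s) := by
  simp only [Complex.sq_norm, Complex.normSq_apply, Complex.sub_re, Complex.sub_im,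
    Complex.ofReal_re, Complex.ofReal_im, Complex.one_re, Complex.one_im]
  ring

theorem norm_sub_mul_le_norm_sub_mul {w : ℂ} {Y s s' : ℝ} (hw : ‖w‖ + ‖w - 1‖ = 2 * Y + 1)
    (hY : 1 / 2 ≤ Y) (hs' : 0 ≤ s') (hs's : s' ≤ s) (hs : s ≤ 1) :
    ‖w - s‖ * (Y + s') ≤ ‖w - s'‖ * (Y + s) := by
  have hYw : Y ≤ ‖w‖ := by
    have := norm_sub_le w 1
    rw [norm_one] at this
    linarith
  have hF (x : ℝ) (hx : x ≤ 1) : 0 ≤ (2 * Y + 1) * (Y + 1 - x) + (‖w‖ - Y) - 1 := by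
    nlinarith
  refine le_of_sq_le_sq ?_ (mul_nonneg (norm_nonneg _) (by linarith))
  rw [mul_pow, mul_pow, norm_sub_ofReal_sq, norm_sub_ofReal_sq, eq_sub_of_add_eq' hw,
    ← sub_nonneg]
  calc 0 ≤ (‖w‖ - Y) * (s - s') *
        (((2 * Y + 1) * (Y + 1 - s) + (‖w‖ - Y) - 1) * (Y + s') +
          ((2 * Y + 1) * (Y + 1 - s') + (‖w‖ - Y) - 1) * (Y + s)) :=
        mul_nonneg (mul_nonneg (sub_nonneg.2 hYw) (sub_nonneg.2 hs's)) <|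
          add_nonneg (mul_nonneg (hF s hs) (by linarith))
            (mul_nonneg (hF s' (hs's.trans hs)) (by linarith))
    _ = _ := by ring

theorem norm_aeval_nodal {ι : Type*} {s : Finset ι} {c : ι → ℝ} (w : ℂ) :
    ‖aeval w (Lagrange.nodal s c)‖ = ∏ j ∈ s, ‖w - c j‖ := by
  simp only [Lagrange.nodal, map_prod, map_sub, aeval_X, aeval_C, Complex.coe_algebraMap,
    norm_prod]

theorem norm_aeval_nodal_mul_le {ι : Type*} {s : Finset ι} {c c' : ι → ℝ}
    (hc' : ∀ j ∈ s, 0 ≤ c' j) (hc'c : ∀ j ∈ s, c' j ≤ c j) (hc : ∀ j ∈ s, c j ≤ 1) {w : ℂ} {Y : ℝ}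
    (hw : ‖w‖ + ‖w - 1‖ = 2 * Y + 1) (hY : 1 / 2 ≤ Y) :
    ‖aeval w (Lagrange.nodal s c)‖ * ‖aeval (-Y : ℂ) (Lagrange.nodal s c')‖ ≤
      ‖aeval w (Lagrange.nodal s c')‖ * ‖aeval (-Y : ℂ) (Lagrange.nodal s c)‖ := by
  have hnorm (x : ℝ) (hx : 0 ≤ x) : ‖(-Y - x : ℂ)‖ = Y + x := by
    rw [← norm_neg, neg_sub, sub_neg_eq_add, add_comm, ← Complex.ofReal_add, Complex.norm_real,
      Real.norm_of_nonneg (by linarith)]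
  simp only [norm_aeval_nodal, ← Finset.prod_mul_distrib]
  refine Finset.prod_le_prod (fun j _ ↦ by positivity) fun j hj ↦ ?_
  rw [hnorm _ (hc' j hj), hnorm _ ((hc' j hj).trans (hc'c j hj))]
  exact norm_sub_mul_le_norm_sub_mul hw hY (hc' j hj) (hc'c j hj) (hc j hj)

theorem IsHypergeometricSol.norm_aeval_mul_le {m : ℕ} {γ δ δ' : ℝ} {q q' : ℝ[X]} (hγ : 0 < γ)
    (hδ : 0 < δ) (hδδ' : δ ≤ δ') (hq : IsHypergeometricSol m γ δ q)
    (hq' : IsHypergeometricSol m γ δ' q') {w : ℂ} {Y : ℝ} (hw : ‖w‖ + ‖w - 1‖ = 2 * Y + 1)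
    (hY : 1 / 2 ≤ Y) :
    ‖aeval w q‖ * ‖aeval (-Y : ℂ) q'‖ ≤ ‖aeval w q'‖ * ‖aeval (-Y : ℂ) q‖ := by
  obtain ⟨a, c, hc, hc01, rfl⟩ := hq.exists_eq_C_mul_nodal hγ hδ
  obtain ⟨a', c', hc', hc01', rfl⟩ := hq'.exists_eq_C_mul_nodal hγ (hδ.trans_le hδδ')
  rcases eq_or_ne a 0 with rfl | ha
  · simp
  rcases eq_or_ne a' 0 with rfl | ha'
  · simp
  have hle : ∀ j, c' j ≤ c j :=
    (hq.of_C_mul ha).node_le_node hγ hδ.le hδδ' (hq'.of_C_mul ha') hc hc' hc01 hc01'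
  have hnodal := norm_aeval_nodal_mul_le (s := Finset.univ) (fun j _ ↦ (hc01' j).1.le)
    (fun j _ ↦ hle j) (fun j _ ↦ (hc01 j).2.le) hw hY
  simp only [map_mul, norm_mul, aeval_C, Complex.coe_algebraMap]
  calc _ = ‖(a : ℂ)‖ * ‖(a' : ℂ)‖ * (‖aeval w (Lagrange.nodal Finset.univ c)‖ *
        ‖aeval (-Y : ℂ) (Lagrange.nodal Finset.univ c')‖) := by ring
    _ ≤ ‖(a : ℂ)‖ * ‖(a' : ℂ)‖ * (‖aeval w (Lagrange.nodal Finset.univ c')‖ *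
        ‖aeval (-Y : ℂ) (Lagrange.nodal Finset.univ c)‖) := by gcongr
    _ = _ := by ring

/-! ### Solutions of the Gegenbauer equation -/

/-- `f z = z ^ ε * q (z ^ 2)` where `q` solves the hypergeometric equation that the substitution
`s = z ^ 2` produces from the Gegenbauer equation
`(1 - z ^ 2) f'' - (2 * lam + 1) z f' + n (n + 2 * lam) f = 0`. Here `n = 2 * m + ε`, and only
`ε = 0` (`f` even) and `ε = 1` (`f` odd) correspond to that equation. -/
def IsGegenbauerSol (m ε : ℕ) (lam : ℝ) (f : ℂ → ℂ) : Prop :=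
  ∃ q : ℝ[X], IsHypergeometricSol m (1 / 2 + ε : ℝ) (lam + 1 / 2) q ∧
    ∀ z, f z = z ^ ε * aeval (z ^ 2) q

namespace IsGegenbauerSol

open Complex (I)

variable {m ε : ℕ} {lam lam' : ℝ} {f g : ℂ → ℂ}

theorem norm_neg (hf : IsGegenbauerSol m ε lam f) (z : ℂ) : ‖f (-z)‖ = ‖f z‖ := by
  obtain ⟨q, -, hfq⟩ := hf
  rw [hfq, hfq, neg_sq, norm_mul, norm_mul, norm_pow, norm_pow, _root_.norm_neg]

theorem norm_mul_norm_le (hf : IsGegenbauerSol m ε lam f) (hg : IsGegenbauerSol m ε lam' g)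
    (hlam : -1 / 2 < lam) (hlam' : lam ≤ lam') {z : ℂ} {y : ℝ}
    (hz : ‖z ^ 2‖ + ‖z ^ 2 - 1‖ = 2 * y ^ 2 + 1) (hy : 1 / 2 ≤ y ^ 2) :
    ‖f z‖ * ‖g (I * y)‖ ≤ ‖g z‖ * ‖f (I * y)‖ := by
  obtain ⟨q, hq, hfq⟩ := hf
  obtain ⟨q', hq', hgq'⟩ := hg
  have hsq : (I * y) ^ 2 = -(y ^ 2 : ℝ) := by
    rw [mul_pow, Complex.I_sq, Complex.ofReal_pow, neg_one_mul]
  have hle := hq.norm_aeval_mul_le (by positivity) (by linarith) (by linarith) hq' hz hy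
  simp only [hfq, hgq', hsq, norm_mul]
  calc _ = ‖z ^ ε‖ * ‖(I * y) ^ ε‖ *
        (‖aeval (z ^ 2) q‖ * ‖aeval (-(y ^ 2 : ℝ) : ℂ) q'‖) := by ring
    _ ≤ ‖z ^ ε‖ * ‖(I * y) ^ ε‖ *
        (‖aeval (z ^ 2) q'‖ * ‖aeval (-(y ^ 2 : ℝ) : ℂ) q‖) := by gcongr
    _ = _ := by ring

theorem norm_le_of_norm_le (hf : IsGegenbauerSol m ε lam f) (hg : IsGegenbauerSol m ε lam' g)
    (hlam : -1 / 2 < lam) (hlam' : lam ≤ lam') {z : ℂ} {y : ℝ}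
    (hz : ‖z ^ 2‖ + ‖z ^ 2 - 1‖ = 2 * y ^ 2 + 1) (hy : 1 / 2 ≤ y ^ 2) (hfy : f (I * y) ≠ 0)
    (hle : ‖f (I * y)‖ ≤ ‖f z‖) : ‖g (I * y)‖ ≤ ‖g z‖ := by
  refine le_of_mul_le_mul_left ?_ (norm_pos_iff.2 hfy)
  calc ‖f (I * y)‖ * ‖g (I * y)‖ ≤ ‖f z‖ * ‖g (I * y)‖ := by gcongr
    _ ≤ ‖g z‖ * ‖f (I * y)‖ := hf.norm_mul_norm_le hg hlam hlam' hz hy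
    _ = _ := mul_comm _ _

end IsGegenbauerSol

section GegenbauerEquation

variable {n m ε : ℕ} {lam : ℝ} {p : ℝ[X]}

theorem coeff_add_two_of_gegenbauer_equation
    (hp : (1 - X ^ 2) * derivative^[2] p =
      C (2 * lam + 1) * X * derivative p - C (n * (n + 2 * lam)) * p) (k : ℕ) :
    (k + 2) * (k + 1) * p.coeff (k + 2) = (k - n) * (k + n + 2 * lam) * p.coeff k := by
  have expanded : derivative (derivative p) - derivative (derivative p) * X * X =
      C (2 * lam + 1) * (derivative p * X) - C (n * (n + 2 * lam)) * p := by
    simp only [Function.iterate_succ, Function.iterate_zero, Function.comp_apply, id_eq] at hp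
    linear_combination hp
  have hk := congrArg (coeff · k) expanded
  rcases k with _ | _ | k <;>
    simp only [coeff_sub, coeff_C_mul, coeff_mul_X, coeff_derivative, mul_coeff_zero,
      coeff_X_zero, coeff_C_zero] at hk <;>
    push_cast at hk ⊢ <;> linear_combination hk

theorem coeff_eq_zero_of_gegenbauer_equation (hlam : -1 / 2 < lam)
    (hp : (1 - X ^ 2) * derivative^[2] p =
      C (2 * lam + 1) * X * derivative p - C (n * (n + 2 * lam)) * p) {k : ℕ}
    (hk : Odd (k + n)) : p.coeff k = 0 := by
  -- The recurrence never breaks off on the wrong parity class.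
  by_contra hk₀
  have hne (j : ℕ) : p.coeff (k + 2 * j) ≠ 0 := by
    induction j with
    | zero => exact hk₀
    | succ j ih =>
      intro hzero
      have hrec := coeff_add_two_of_gegenbauer_equation hp (k + 2 * j)
      rw [show k + 2 * j + 2 = k + 2 * (j + 1) by ring, hzero, mul_zero, eq_comm, mul_eq_zero,
        mul_eq_zero, sub_eq_zero, Nat.cast_inj] at hrec
      have hkn : (1 : ℝ) ≤ k + n := by exact_mod_cast hk.pos
      rcases hrec with (hrec | hrec) | hrec
      · grind
      · push_cast at hrec
        linarith [(Nat.cast_nonneg j : (0 : ℝ) ≤ j)]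
      · exact ih hrec
  exact hne (p.natDegree + 1) (coeff_eq_zero_of_natDegree_lt (by omega))

theorem exists_coeff_eq_coeff_two_mul_add {R : Type*} [CommSemiring R] (p : R[X]) (r : ℕ) :
    ∃ q : R[X], ∀ j, q.coeff j = p.coeff (2 * j + r) := by
  refine ⟨contract 2 (divX^[r] p), fun j ↦ ?_⟩
  rw [coeff_contract two_ne_zero, mul_comm]
  induction r generalizing p with
  | zero => rfl
  | succ r ih => rw [Function.iterate_succ_apply, ih, coeff_divX, add_assoc]

theorem IsGegenbauerSol.of_gegenbauer_equation (hε : ε ≤ 1) (hlam : -1 / 2 < lam)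
    (hp : (1 - X ^ 2) * derivative^[2] p = C (2 * lam + 1) * X * derivative p
      - C ((2 * m + ε : ℕ) * ((2 * m + ε : ℕ) + 2 * lam)) * p) :
    IsGegenbauerSol m ε lam fun z ↦ aeval z p := by
  obtain ⟨q, hq⟩ := exists_coeff_eq_coeff_two_mul_add p ε
  have hpq : p = X ^ ε * expand ℝ 2 q := by
    ext k
    rw [coeff_X_pow_mul', coeff_expand two_pos, hq]
    split_ifs with hk hdvd
    · congr 1
      omega
    · exact coeff_eq_zero_of_gegenbauer_equation hlam hp (by grind)
    · exact coeff_eq_zero_of_gegenbauer_equation hlam hp (by grind)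
  refine ⟨q, IsHypergeometricSol.iff_coeff.2 fun j ↦ ?_, fun z ↦ ?_⟩
  · have hrec := coeff_add_two_of_gegenbauer_equation hp (2 * j + ε)
    rw [hq, hq, show 2 * (j + 1) + ε = 2 * j + ε + 2 by ring]
    interval_cases ε <;> push_cast at hrec ⊢ <;> linear_combination hrec / 4
  · simp only [hpq, map_mul, map_pow, aeval_X, expand_aeval]

end GegenbauerEquation

theorem isGegenbauerSol_chebyshevT (m : ℕ) :
    IsGegenbauerSol m 1 0 fun z ↦ (Chebyshev.T ℂ ((2 * m + 1 : ℕ) : ℤ)).eval z := by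
  simp only [← Chebyshev.aeval_T (R := ℝ)]
  refine .of_gegenbauer_equation le_rfl (by norm_num) ?_
  rw [Chebyshev.one_sub_X_sq_mul_derivative_derivative_T_eq_poly_in_T]
  simp only [map_add, map_mul, map_natCast, map_ofNat, map_zero, map_one, Int.cast_natCast]
  ring

theorem isGegenbauerSol_chebyshevU (m : ℕ) :
    IsGegenbauerSol m 0 1 fun z ↦ (Chebyshev.U ℂ ((2 * m : ℕ) : ℤ)).eval z := by
  simp only [← Chebyshev.aeval_U (R := ℝ)]
  refine .of_gegenbauer_equation zero_le_one (by norm_num) ?_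
  rw [Chebyshev.one_sub_X_sq_mul_derivative_derivative_U_eq_poly_in_U]
  simp only [map_add, map_mul, map_natCast, map_ofNat, map_one, Int.cast_natCast, add_zero]
  ring

/-- The coefficient of `z ^ (2 * i + ε)` in `gegenbauerC lam (2 * m + ε) z`, for `i ≤ m`; the index
`k` in the definition of `gegenbauerC` is `m - i`. -/
noncomputable def gegenbauerCoeff (lam : ℝ) (m ε i : ℕ) : ℝ :=
  (-1) ^ (m - i) *
    (Real.Gamma (m + i + ε + lam) /
      (Real.Gamma lam * (Nat.factorial (m - i)) * (Nat.factorial (2 * i + ε)))) *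
    2 ^ (2 * i + ε)

theorem gegenbauerCoeff_succ {lam : ℝ} (hlam : 0 < lam) {m ε i : ℕ} (hε : ε ≤ 1) (hi : i < m) :
    (i + 1) * (i + (1 / 2 + ε)) * gegenbauerCoeff lam m ε (i + 1) =
      (i - m) * (i + m + (1 / 2 + ε) + (lam + 1 / 2) - 1) * gegenbauerCoeff lam m ε i := by
  obtain ⟨j, rfl⟩ : ∃ j, m = i + 1 + j := ⟨m - (i + 1), by omega⟩
  have hGamma : Real.Gamma ((i + 1 + j : ℕ) + (i + 1 : ℕ) + ε + lam) =
      ((i + 1 + j : ℕ) + i + ε + lam) * Real.Gamma ((i + 1 + j : ℕ) + i + ε + lam) := by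
    rw [← Real.Gamma_add_one (by positivity)]
    push_cast
    ring_nf
  have hGamma_lam : Real.Gamma lam ≠ 0 := (Real.Gamma_pos_of_pos hlam).ne'
  rw [gegenbauerCoeff, gegenbauerCoeff, hGamma, show i + 1 + j - (i + 1) = j by omega,
    show i + 1 + j - i = j + 1 by omega, show 2 * (i + 1) + ε = 2 * i + ε + 1 + 1 by ring]
  simp only [Nat.factorial_succ, pow_succ]
  interval_cases ε <;> push_cast <;> field_simp <;> ring

theorem gegenbauerC_eq_pow_mul_sum (lam : ℝ) {m ε : ℕ} (hε : ε ≤ 1) (z : ℂ) :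
    gegenbauerC lam (2 * m + ε) z =
      z ^ ε * ∑ i ∈ Finset.range (m + 1), gegenbauerCoeff lam m ε i * (z ^ 2) ^ i := by
  rw [gegenbauerC, show (2 * m + ε) / 2 = m by omega, Finset.mul_sum, ← Finset.sum_range_reflect]
  refine Finset.sum_congr rfl fun i hi ↦ ?_
  have him : i ≤ m := Nat.lt_succ_iff.1 (Finset.mem_range.1 hi)
  have hGamma_arg : ((2 * m + ε : ℕ) : ℝ) - (m - i : ℕ) + lam = m + i + ε + lam := by
    rw [Nat.cast_sub him]
    push_cast
    ring
  rw [show m + 1 - 1 - i = m - i by omega, show 2 * m + ε - 2 * (m - i) = 2 * i + ε by omega,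
    hGamma_arg, gegenbauerCoeff]
  push_cast
  ring

theorem isGegenbauerSol_gegenbauerC {lam : ℝ} (hlam : 0 < lam) (m : ℕ) {ε : ℕ} (hε : ε ≤ 1) :
    IsGegenbauerSol m ε lam (gegenbauerC lam (2 * m + ε)) := by
  refine ⟨∑ i ∈ Finset.range (m + 1), C (gegenbauerCoeff lam m ε i) * X ^ i,
    IsHypergeometricSol.iff_coeff.2 fun k ↦ ?_, fun z ↦ ?_⟩
  · have hcoeff (k : ℕ) :
        (∑ i ∈ Finset.range (m + 1), C (gegenbauerCoeff lam m ε i) * X ^ i).coeff k =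
          if k ≤ m then gegenbauerCoeff lam m ε k else 0 := by
      simp [coeff_C_mul, coeff_X_pow]
    rw [hcoeff, hcoeff]
    rcases lt_trichotomy k m with hk | rfl | hk
    · rw [if_pos (Nat.succ_le_of_lt hk), if_pos hk.le, gegenbauerCoeff_succ hlam hε hk]
    · simp
    · rw [if_neg (by omega), if_neg (by omega), mul_zero, mul_zero]
  · simp only [gegenbauerC_eq_pow_mul_sum lam hε, map_sum, map_mul, map_pow, aeval_C, aeval_X,
      Complex.coe_algebraMap]

/-! ### Chebyshev polynomials on the Bernstein ellipse -/

theorem two_mul_eval_chebyshevT {R : Type*} [CommRing R] {u v x : R} (huv : u * v = 1)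
    (hx : 2 * x = u + v) (n : ℕ) : 2 * (Chebyshev.T R n).eval x = u ^ n + v ^ n := by
  rw [← dickson_one_one_eval_add_inv u v huv n, dickson_one_one_eq_chebyshev_C, ← hx]
  simpa using (congrArg (eval x) (Chebyshev.C_comp_two_mul_X R n)).symm

theorem sub_mul_eval_chebyshevU {R : Type*} [CommRing R] {u v x : R} (huv : u * v = 1)
    (hx : 2 * x = u + v) (n : ℕ) :
    (u - v) * (Chebyshev.U R n).eval x = u ^ (n + 1) - v ^ (n + 1) := by
  induction n using Nat.twoStepInduction with
  | zero => simp
  | one =>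
    simp only [Nat.cast_one, Chebyshev.U_one, eval_mul, eval_ofNat, eval_X, hx]
    ring
  | more n ih₀ ih₁ =>
    push_cast at ih₁ ⊢
    simp only [Chebyshev.U_add_two, eval_sub, eval_mul, eval_ofNat, eval_X, hx]
    linear_combination (u + v) * ih₁ - ih₀ + (u ^ (n + 1) - v ^ (n + 1)) * huv

theorem norm_sq_add_norm_sq_sub_one_of_mem_bernsteinEllipse {ρ : ℝ} (hρ : ρ ≠ 0) {z : ℂ}
    (hz : z ∈ bernsteinEllipse ρ) :
    ‖z ^ 2‖ + ‖z ^ 2 - 1‖ = 2 * ((ρ - ρ⁻¹) / 2) ^ 2 + 1 := by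
  obtain ⟨u, hu, rfl⟩ := hz
  have hu₀ : u ≠ 0 := norm_ne_zero_iff.1 (hu ▸ hρ)
  have hsub : ((u + u⁻¹) / 2) ^ 2 - 1 = ((u - u⁻¹) / 2) ^ 2 := by
    field_simp
    ring
  have hpar := parallelogram_law_with_norm ℝ u u⁻¹
  rw [norm_inv, hu] at hpar
  rw [hsub, norm_pow, norm_pow, norm_div, norm_div, Complex.norm_ofNat]
  linear_combination hpar / 4 + mul_inv_cancel₀ hρ

theorem two_mul_minor_endpoint (ρ : ℝ) :
    2 * (Complex.I * ((ρ - ρ⁻¹) / 2 : ℝ)) = Complex.I * ρ + -(Complex.I * (ρ⁻¹ : ℝ)) := by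
  push_cast
  ring

theorem I_mul_mul_neg_I_mul_inv {ρ : ℝ} (hρ : ρ ≠ 0) :
    Complex.I * ρ * -(Complex.I * (ρ⁻¹ : ℝ)) = 1 := by
  rw [mul_neg, mul_mul_mul_comm, Complex.I_mul_I, ← Complex.ofReal_mul, mul_inv_cancel₀ hρ,
    Complex.ofReal_one, mul_one, neg_neg]

theorem norm_chebyshevT_minor_endpoint {ρ : ℝ} (hρ : 1 ≤ ρ) {n : ℕ} (hn : Odd n) :
    2 * ‖(Chebyshev.T ℂ n).eval (Complex.I * ((ρ - ρ⁻¹) / 2 : ℝ))‖ = ρ ^ n - ρ⁻¹ ^ n := by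
  have hpow : ρ⁻¹ ^ n ≤ ρ ^ n :=
    pow_le_pow_left₀ (by positivity) ((inv_le_one_of_one_le₀ hρ).trans hρ) n
  have heval := two_mul_eval_chebyshevT (I_mul_mul_neg_I_mul_inv (by positivity))
    (two_mul_minor_endpoint ρ) n
  rw [hn.neg_pow, mul_pow, mul_pow, ← sub_eq_add_neg, ← mul_sub, ← Complex.ofReal_pow,
    ← Complex.ofReal_pow, ← Complex.ofReal_sub] at heval
  have hnorm := congrArg norm heval
  rwa [norm_mul, norm_mul, norm_pow, Complex.norm_I, one_pow, one_mul, Complex.norm_ofNat,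
    Complex.norm_of_nonneg (sub_nonneg.2 hpow)] at hnorm

theorem norm_chebyshevU_minor_endpoint {ρ : ℝ} (hρ : 0 < ρ) {n : ℕ} (hn : Even n) :
    (ρ + ρ⁻¹) * ‖(Chebyshev.U ℂ n).eval (Complex.I * ((ρ - ρ⁻¹) / 2 : ℝ))‖ =
      ρ ^ (n + 1) + ρ⁻¹ ^ (n + 1) := by
  have heval := sub_mul_eval_chebyshevU (I_mul_mul_neg_I_mul_inv hρ.ne')
    (two_mul_minor_endpoint ρ) n
  rw [hn.add_one.neg_pow, mul_pow, mul_pow, sub_neg_eq_add, sub_neg_eq_add, ← mul_add, ← mul_add,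
    ← Complex.ofReal_pow, ← Complex.ofReal_pow, ← Complex.ofReal_add, ← Complex.ofReal_add]
    at heval
  have hnorm := congrArg norm heval
  rwa [norm_mul, norm_mul, norm_mul, norm_pow, Complex.norm_I, one_pow, one_mul, one_mul,
    Complex.norm_of_nonneg (by positivity), Complex.norm_of_nonneg (by positivity)] at hnorm

theorem norm_chebyshevT_minor_endpoint_le {ρ : ℝ} (hρ : 1 ≤ ρ) {n : ℕ} (hn : Odd n) {z : ℂ}
    (hz : z ∈ bernsteinEllipse ρ) :
    ‖(Chebyshev.T ℂ n).eval (Complex.I * ((ρ - ρ⁻¹) / 2 : ℝ))‖ ≤ ‖(Chebyshev.T ℂ n).eval z‖ := by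
  obtain ⟨u, hu, rfl⟩ := hz
  have hu₀ : u ≠ 0 := norm_pos_iff.1 (by linarith)
  refine le_of_mul_le_mul_left ?_ two_pos
  calc _ = ‖u ^ n‖ - ‖-u⁻¹ ^ n‖ := by
        rw [norm_chebyshevT_minor_endpoint hρ hn, norm_neg, norm_pow, norm_pow, norm_inv, hu]
    _ ≤ ‖u ^ n - -u⁻¹ ^ n‖ := norm_sub_norm_le _ _
    _ = 2 * ‖(Chebyshev.T ℂ n).eval ((u + u⁻¹) / 2)‖ := by
        rw [sub_neg_eq_add, ← two_mul_eval_chebyshevT (mul_inv_cancel₀ hu₀)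
          (mul_div_cancel₀ _ two_ne_zero), norm_mul, Complex.norm_ofNat]

theorem norm_mul_sub_mul_inv_sq {ω : ℂ} (hω : ‖ω‖ = 1) (a b : ℝ) :
    ‖a * ω - b * ω⁻¹‖ ^ 2 = (a + b) ^ 2 - a * b * ‖ω + ω⁻¹‖ ^ 2 := by
  have hsq : ω.re * ω.re + ω.im * ω.im = 1 := by
    rw [← Complex.normSq_apply, ← Complex.sq_norm, hω, one_pow]
  rw [Complex.inv_eq_conj hω]
  simp only [Complex.sq_norm, Complex.normSq_apply, Complex.sub_re, Complex.sub_im, Complex.add_re,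
    Complex.add_im, Complex.re_ofReal_mul, Complex.im_ofReal_mul, Complex.conj_re, Complex.conj_im]
  linear_combination (a + b) ^ 2 * hsq

theorem norm_pow_add_pow_le {x y : ℂ} (hxy : x * y = 1) (hx : ‖x‖ = 1) {n : ℕ} (hn : Odd n) :
    ‖x ^ n + y ^ n‖ ≤ n * ‖x + y‖ := by
  have hy : ‖y‖ = 1 := by simpa [hx] using congrArg norm hxy
  obtain ⟨k, rfl⟩ := hn
  induction k with
  | zero => simp
  | succ k ih =>
    have hsplit : x ^ (2 * (k + 1) + 1) + y ^ (2 * (k + 1) + 1) =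
        (x + y) * (x ^ (2 * k + 2) + y ^ (2 * k + 2)) - (x ^ (2 * k + 1) + y ^ (2 * k + 1)) := by
      linear_combination (-(x ^ (2 * k + 1) + y ^ (2 * k + 1))) * hxy
    have htwo : ‖x ^ (2 * k + 2) + y ^ (2 * k + 2)‖ ≤ 2 := by
      simpa [hx, hy, one_add_one_eq_two] using norm_add_le (x ^ (2 * k + 2)) (y ^ (2 * k + 2))
    calc _ ≤ ‖x + y‖ * ‖x ^ (2 * k + 2) + y ^ (2 * k + 2)‖
            + ‖x ^ (2 * k + 1) + y ^ (2 * k + 1)‖ := by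
          rw [hsplit, ← norm_mul]
          exact norm_sub_le _ _
      _ ≤ ‖x + y‖ * 2 + (2 * k + 1 : ℕ) * ‖x + y‖ := by gcongr
      _ = _ := by push_cast; ring

theorem natCast_mul_add_inv_le {ρ : ℝ} (hρ : 1 ≤ ρ) (hy : 1 / 2 ≤ ((ρ - ρ⁻¹) / 2) ^ 2) {n : ℕ}
    (hn : Odd n) : n * (ρ + ρ⁻¹) ≤ ρ ^ n + ρ⁻¹ ^ n := by
  have hinv₀ : 0 ≤ ρ⁻¹ := by positivity
  have hinv₁ : ρ⁻¹ ≤ 1 := inv_le_one_of_one_le₀ hρ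
  obtain ⟨k, rfl⟩ := hn
  induction k with
  | zero => simp
  | succ k ih =>
    have hup : ρ ^ 2 ≤ ρ ^ (2 * k + 2) := pow_le_pow_right₀ hρ (by omega)
    have hdown : ρ⁻¹ ^ (2 * k + 2) ≤ ρ⁻¹ ^ 2 := pow_le_pow_of_le_one hinv₀ hinv₁ (by omega)
    have hsplit : ρ ^ (2 * (k + 1) + 1) + ρ⁻¹ ^ (2 * (k + 1) + 1) = ρ ^ (2 * k + 1) +
        ρ⁻¹ ^ (2 * k + 1) + (ρ ^ (2 * k + 2) - ρ⁻¹ ^ (2 * k + 2)) * (ρ - ρ⁻¹) := by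
      linear_combination (ρ ^ (2 * k + 1) + ρ⁻¹ ^ (2 * k + 1)) *
        mul_inv_cancel₀ (by positivity : ρ ≠ 0)
    calc ((2 * (k + 1) + 1 : ℕ) : ℝ) * (ρ + ρ⁻¹)
        = (2 * k + 1 : ℕ) * (ρ + ρ⁻¹) + 2 * (ρ + ρ⁻¹) := by push_cast; ring
      _ ≤ (2 * k + 1 : ℕ) * (ρ + ρ⁻¹) + (ρ - ρ⁻¹) ^ 2 * (ρ + ρ⁻¹) := by
          gcongr
          linarith
      _ = (2 * k + 1 : ℕ) * (ρ + ρ⁻¹) + (ρ ^ 2 - ρ⁻¹ ^ 2) * (ρ - ρ⁻¹) := by ring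
      _ ≤ _ := by
          rw [hsplit]
          gcongr
          linarith

theorem norm_sub_inv_mul_le {ρ : ℝ} (hρ : 1 ≤ ρ) (hy : 1 / 2 ≤ ((ρ - ρ⁻¹) / 2) ^ 2) {u : ℂ}
    (hu : ‖u‖ = ρ) {n : ℕ} (hn : Odd n) :
    ‖u - u⁻¹‖ * (ρ ^ n + ρ⁻¹ ^ n) ≤ ‖u ^ n - u⁻¹ ^ n‖ * (ρ + ρ⁻¹) := by
  have hρ₀ : (ρ : ℂ) ≠ 0 := Complex.ofReal_ne_zero.2 (by positivity)
  obtain ⟨ω, hω, rfl⟩ : ∃ ω : ℂ, ‖ω‖ = 1 ∧ u = ρ * ω :=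
    ⟨u / ρ, by rw [norm_div, hu, Complex.norm_of_nonneg (by positivity), div_self (by positivity)],
      (mul_div_cancel₀ u hρ₀).symm⟩
  have hnorm (k : ℕ) : ‖(ρ * ω) ^ k - (ρ * ω)⁻¹ ^ k‖ ^ 2 =
      (ρ ^ k + ρ⁻¹ ^ k) ^ 2 - ‖ω ^ k + ω⁻¹ ^ k‖ ^ 2 := by
    have := norm_mul_sub_mul_inv_sq (ω := ω ^ k) (by rw [norm_pow, hω, one_pow]) (ρ ^ k) (ρ⁻¹ ^ k)
    rw [← mul_pow ρ, mul_inv_cancel₀ (by positivity), one_pow, one_mul] at this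
    simpa [mul_pow, mul_comm (ω ^ k)⁻¹] using this
  have hne : ω ≠ 0 := norm_ne_zero_iff.1 (hω ▸ one_ne_zero)
  have hratio : ‖ω ^ n + ω⁻¹ ^ n‖ * (ρ + ρ⁻¹) ≤ ‖ω + ω⁻¹‖ * (ρ ^ n + ρ⁻¹ ^ n) :=
    calc _ ≤ n * ‖ω + ω⁻¹‖ * (ρ + ρ⁻¹) := by
          gcongr
          exact norm_pow_add_pow_le (mul_inv_cancel₀ hne) hω hn
      _ = ‖ω + ω⁻¹‖ * (n * (ρ + ρ⁻¹)) := by ring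
      _ ≤ _ := by
          gcongr
          exact natCast_mul_add_inv_le hρ hy hn
  have hone := hnorm 1
  simp only [pow_one] at hone
  refine le_of_sq_le_sq ?_ (by positivity)
  rw [mul_pow, mul_pow, hone, hnorm]
  linarith [pow_le_pow_left₀ (by positivity) hratio 2]

theorem norm_chebyshevU_minor_endpoint_le {ρ : ℝ} (hρ : 1 < ρ)
    (hy : 1 / 2 ≤ ((ρ - ρ⁻¹) / 2) ^ 2) {n : ℕ} (hn : Even n) {z : ℂ}
    (hz : z ∈ bernsteinEllipse ρ) :
    ‖(Chebyshev.U ℂ n).eval (Complex.I * ((ρ - ρ⁻¹) / 2 : ℝ))‖ ≤ ‖(Chebyshev.U ℂ n).eval z‖ := by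
  obtain ⟨u, hu, rfl⟩ := hz
  have hu₀ : u ≠ 0 := norm_pos_iff.1 (by linarith)
  have hsub : 0 < ‖u - u⁻¹‖ := by
    have := norm_sub_norm_le u u⁻¹
    rw [norm_inv, hu] at this
    linarith [inv_lt_one_of_one_lt₀ hρ]
  have heval : ‖u - u⁻¹‖ * ‖(Chebyshev.U ℂ n).eval ((u + u⁻¹) / 2)‖ =
      ‖u ^ (n + 1) - u⁻¹ ^ (n + 1)‖ := by
    rw [← norm_mul, sub_mul_eval_chebyshevU (mul_inv_cancel₀ hu₀) (mul_div_cancel₀ _ two_ne_zero)]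
  refine le_of_mul_le_mul_left ?_ (mul_pos hsub (by positivity : 0 < ρ + ρ⁻¹))
  calc _ = ‖u - u⁻¹‖ * (ρ ^ (n + 1) + ρ⁻¹ ^ (n + 1)) := by
        rw [mul_assoc, norm_chebyshevU_minor_endpoint (by positivity) hn]
    _ ≤ ‖u ^ (n + 1) - u⁻¹ ^ (n + 1)‖ * (ρ + ρ⁻¹) :=
        norm_sub_inv_mul_le hρ.le hy hu hn.add_one
    _ = _ := by rw [← heval, mul_right_comm]

/-! ### Gegenbauer polynomials on the Bernstein ellipse -/

theorem norm_gegenbauerC_minor_endpoint_le_of_odd {ρ : ℝ} (hρ : 1 < ρ)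
    (hy : 1 / 2 ≤ ((ρ - ρ⁻¹) / 2) ^ 2) {lam : ℝ} (hlam : 0 < lam) {n : ℕ} (hn : Odd n) {z : ℂ}
    (hz : z ∈ bernsteinEllipse ρ) :
    ‖gegenbauerC lam n (Complex.I * ((ρ - ρ⁻¹) / 2 : ℝ))‖ ≤ ‖gegenbauerC lam n z‖ := by
  have hT : (Chebyshev.T ℂ n).eval (Complex.I * ((ρ - ρ⁻¹) / 2 : ℝ)) ≠ 0 := by
    have hpow : ρ⁻¹ ^ n < ρ ^ n :=
      pow_lt_pow_left₀ ((inv_lt_one_of_one_lt₀ hρ).trans hρ) (by positivity) hn.pos.ne'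
    refine norm_pos_iff.1 (pos_of_mul_pos_right ?_ zero_le_two)
    rw [norm_chebyshevT_minor_endpoint hρ.le hn]
    exact sub_pos.2 hpow
  have hle := norm_chebyshevT_minor_endpoint_le hρ.le hn hz
  obtain ⟨m, rfl⟩ := hn
  exact (isGegenbauerSol_chebyshevT m).norm_le_of_norm_le
    (isGegenbauerSol_gegenbauerC hlam m le_rfl) (by norm_num) hlam.le
    (norm_sq_add_norm_sq_sub_one_of_mem_bernsteinEllipse (by positivity) hz) hy hT hle

theorem norm_gegenbauerC_minor_endpoint_le_of_even {ρ : ℝ} (hρ : 1 < ρ)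
    (hy : 1 / 2 ≤ ((ρ - ρ⁻¹) / 2) ^ 2) {lam : ℝ} (hlam : 1 ≤ lam) {n : ℕ} (hn : Even n) {z : ℂ}
    (hz : z ∈ bernsteinEllipse ρ) :
    ‖gegenbauerC lam n (Complex.I * ((ρ - ρ⁻¹) / 2 : ℝ))‖ ≤ ‖gegenbauerC lam n z‖ := by
  have hU : (Chebyshev.U ℂ n).eval (Complex.I * ((ρ - ρ⁻¹) / 2 : ℝ)) ≠ 0 := by
    refine norm_pos_iff.1 (pos_of_mul_pos_right ?_ (by positivity : 0 ≤ ρ + ρ⁻¹))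
    rw [norm_chebyshevU_minor_endpoint (by positivity) hn]
    positivity
  have hle := norm_chebyshevU_minor_endpoint_le hρ hy hn hz
  obtain ⟨m, rfl⟩ := even_iff_exists_two_mul.1 hn
  exact (isGegenbauerSol_chebyshevU m).norm_le_of_norm_le
    (isGegenbauerSol_gegenbauerC (by linarith) m zero_le_one) (by norm_num) hlam
    (norm_sq_add_norm_sq_sub_one_of_mem_bernsteinEllipse (by positivity) hz) hy hU hle

theorem norm_gegenbauerC_neg {lam : ℝ} (hlam : 0 < lam) (n : ℕ) (z : ℂ) :
    ‖gegenbauerC lam n (-z)‖ = ‖gegenbauerC lam n z‖ := by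
  have hmod : n % 2 ≤ 1 := Nat.lt_succ_iff.1 (n.mod_lt two_pos)
  have hnorm := (isGegenbauerSol_gegenbauerC hlam (n / 2) hmod).norm_neg z
  rwa [Nat.div_add_mod] at hnorm

theorem sqrt_two_le_sub_inv {ρ : ℝ} (hρ : (√2 + √6) / 2 ≤ ρ) : √2 ≤ ρ - ρ⁻¹ := by
  have hinv : ((√2 + √6) / 2)⁻¹ = (√6 - √2) / 2 := by
    refine inv_eq_of_mul_eq_one_right ?_
    linear_combination Real.sq_sqrt (show (0 : ℝ) ≤ 6 by norm_num) / 4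
      - Real.sq_sqrt (show (0 : ℝ) ≤ 2 by norm_num) / 4
  have := inv_anti₀ (by positivity) hρ
  linarith

end Gegenbauer

/-- for `n ≥ 2`, `ρ ≥ (√2 + √6)/2`, and `λ > 1` or (`0 < λ < 1` and `n` odd),
the minimum of `|C_n^λ|` over `E_ρ` is attained at the two endpoints `± i(ρ - ρ⁻¹)/2` of the
minor axis. -/
theorem gegenbauer_min_at_minor_axis
    (n : ℕ) (hn : 2 ≤ n) (ρ : ℝ) (hρ : (Real.sqrt 2 + Real.sqrt 6) / 2 ≤ ρ)
    (lam : ℝ) (hlam : 1 < lam ∨ (0 < lam ∧ lam < 1 ∧ Odd n)) :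
    (∀ z ∈ bernsteinEllipse ρ,
      ‖gegenbauerC lam n (Complex.I * (((ρ - ρ⁻¹) / 2 : ℝ) : ℂ))‖ ≤
        ‖gegenbauerC lam n z‖) ∧
    ‖gegenbauerC lam n (Complex.I * (((ρ - ρ⁻¹) / 2 : ℝ) : ℂ))‖ =
      ‖gegenbauerC lam n (-(Complex.I * (((ρ - ρ⁻¹) / 2 : ℝ) : ℂ)))‖ := by
  have hlam₀ : 0 < lam := hlam.elim zero_lt_one.trans And.left
  have hsub : √2 ≤ ρ - ρ⁻¹ := Gegenbauer.sqrt_two_le_sub_inv hρ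
  have hρ₀ : 0 < ρ := lt_of_lt_of_le (by positivity) hρ
  have hρ₁ : 1 < ρ := by linarith [Real.one_lt_sqrt_two, inv_pos.2 hρ₀]
  have hy : 1 / 2 ≤ ((ρ - ρ⁻¹) / 2) ^ 2 := by
    rw [div_pow]
    linarith [(Real.sqrt_le_iff.1 hsub).2]
  refine ⟨fun z hz ↦ ?_, (Gegenbauer.norm_gegenbauerC_neg hlam₀ n _).symm⟩
  rcases n.even_or_odd with heven | hodd
  · have hlam₁ : 1 ≤ lam := hlam.elim le_of_lt fun h ↦ absurd h.2.2 (Nat.not_odd_iff_even.2 heven)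
    exact Gegenbauer.norm_gegenbauerC_minor_endpoint_le_of_even hρ₁ hy hlam₁ heven hz
  · exact Gegenbauer.norm_gegenbauerC_minor_endpoint_le_of_odd hρ₁ hy hlam₀ hodd hz
end
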